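/- arXiv:0803.4392 — 3 statements merged into one kernel-verified Lean document; each statement's English description precedes it below -/
import Mathlib

section
/- Let E = {p_1⋯p_{j−1} p̌_j p_{j+1}⋯p_k : k ≥ 2, 1 ≤ j ≤ k} and Φ(x) = x ln(1+x)/ln ln(3+x). There exists an absolute constant c > 0 such that for every f ∈ L^Φ(𝕋) and every λ > 0, |{x ∈ 𝕋 : sup_{n∈E} |R_n f(x)| > λ}| ≤ ∫_𝕋 Φ(c|f(t)|/λ) dt. -/
open MeasureTheory Filter Set

/-- The circle `𝕋 = ℝ/ℤ` with its Lebesgue (Haar) probability measure. -/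
abbrev Circle1 := AddCircle (1 : ℝ)

/-- The Riemann sum operator `R_n f(x) = (1/n) ∑_{k=0}^{n-1} f(x + k/n)`. -/
noncomputable def RiemannSum (n : ℕ) (f : Circle1 → ℝ) (x : Circle1) : ℝ :=
  (n : ℝ)⁻¹ * ∑ k ∈ Finset.range n, f (x + (((k : ℝ) / (n : ℝ) : ℝ) : Circle1))

/-- `nthPrime k` is the `(k+1)`-st prime: `nthPrime 0 = 2 = p_1`, … -/
noncomputable def nthPrime (k : ℕ) : ℕ := Nat.nth Nat.Prime k

/-- The set `E = {p_1 ⋯ p_{j-1} p̌_j p_{j+1} ⋯ p_k : k ≥ 2, 1 ≤ j ≤ k}`: all products of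
the first `k` primes (`k ≥ 2`) with exactly one factor omitted. -/
noncomputable def Eset : Set ℕ :=
  {m | ∃ k : ℕ, 2 ≤ k ∧ ∃ j < k, m = ∏ i ∈ Finset.range k \ {j}, nthPrime i}

/-- `Φ(x) = x ln(1+x) / ln ln(3+x)`. -/
noncomputable def PhiE (x : ℝ) : ℝ := x * Real.log (1 + x) / Real.log (Real.log (3 + x))

/-!
For a finite subgroup `H`, averaging over the cosets of `H` is a conditional expectation, and the
averages over `H` and `K` compose to the average over `H ⊔ K`. The Riemann sum `R_n` averages over
the subgroup generated by `1/n`, so if `n = p_1 ⋯ p̌_j ⋯ p_k` it is the average over the *tail*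
`p_{j+1} ⋯ p_k` of the average over the *head* `p_1 ⋯ p_{j-1}`.

If the head `p_1 ⋯ p_{j-1}` could be replaced by `p_1 ⋯ p_j`, only the averages over the increasing
chain `p_1 ⋯ p_k` would remain, and those satisfy the maximal inequality for martingales. The
replacement costs a factor `e^t` except where the average drops by more than `e^t` when `p_j` joins
the head. The part lost there (the excess) is summable over `j`: each such drop decreases the
entropy `∫ u log (1 + a u)` of the averages by at least `t / 2` times the excess. The maximal
inequality along each chain of tails then controls the excess, at the total price
`∫ (e^t f + (2 / t) f log (1 + a f))`. On layers where `log log f` is comparable to `t`, this is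
`O(∫ f log f / log log f)`, and the doubly exponential layers `[a_s, a_{s+1})` are of this kind.
-/

open scoped ENNReal

lemma lintegral_indicator_one_mul {α : Type*} [MeasurableSpace α] {μ : Measure α} {S : Set α}
    (hS : MeasurableSet S) (f : α → ℝ≥0∞) :
    ∫⁻ x, S.indicator 1 x * f x ∂μ = ∫⁻ x in S, f x ∂μ := by
  rw [← lintegral_indicator hS]
  simp only [← Set.indicator_mul_left, Pi.one_apply, one_mul]

section OrbitMean

variable {G : Type*} [AddCommGroup G] {H K : AddSubgroup G} {f g : G → ℝ≥0∞}

/-- The mean of `f` over the coset `x + H` of a finite subgroup `H`; it is the conditional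
expectation of `f` on the `H`-periodic functions. Values in `ℝ≥0∞` dispense with summability;
the value for infinite `H` is junk. -/
noncomputable def orbitMean (H : AddSubgroup G) (f : G → ℝ≥0∞) (x : G) : ℝ≥0∞ :=
  (Nat.card H : ℝ≥0∞)⁻¹ * ∑' h : H, f (x + h)

/-- Invariance of `f` under translation by every element of the subgroup `H`. -/
def IsPeriodic {M : Type*} (H : AddSubgroup G) (f : G → M) : Prop :=
  ∀ h ∈ H, Function.Periodic f h

lemma IsPeriodic.of_le {M : Type*} {f : G → M} (hf : IsPeriodic H f) (hKH : K ≤ H) :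
    IsPeriodic K f :=
  fun h hh ↦ hf h (hKH hh)

lemma IsPeriodic.comp {M N : Type*} {f : G → M} (hf : IsPeriodic H f) (φ : M → N) :
    IsPeriodic H fun x ↦ φ (f x) :=
  fun h hh ↦ (hf h hh).comp φ

lemma IsPeriodic.sup {M : Type*} {f : G → M} (hH : IsPeriodic H f) (hK : IsPeriodic K f) :
    IsPeriodic (H ⊔ K) f := by
  intro l hl
  obtain ⟨h, hh, k, hk, rfl⟩ := AddSubgroup.mem_sup.1 hl
  exact (hH h hh).add_period (hK k hk)

lemma orbitMean_isPeriodic (H : AddSubgroup G) (f : G → ℝ≥0∞) :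
    IsPeriodic H (orbitMean H f) := by
  intro h hh x
  simp only [orbitMean, add_assoc]
  rw [← (Equiv.addLeft (⟨h, hh⟩ : H)).tsum_eq fun k : H ↦ f (x + k)]
  rfl

lemma IsPeriodic.orbitMean_right (hf : IsPeriodic K f) : IsPeriodic K (orbitMean H f) := by
  intro k hk x
  simp only [orbitMean, add_right_comm x k, hf k hk _]

lemma orbitMean_mono (hfg : f ≤ g) : orbitMean H f ≤ orbitMean H g := by
  intro x
  unfold orbitMean
  gcongr
  exact hfg _

lemma orbitMean_add (f g : G → ℝ≥0∞) (x : G) :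
    orbitMean H (fun y ↦ f y + g y) x = orbitMean H f x + orbitMean H g x := by
  simp only [orbitMean, ENNReal.tsum_add, mul_add]

lemma orbitMean_tsum {ι : Type*} (f : ι → G → ℝ≥0∞) (x : G) :
    orbitMean H (fun y ↦ ∑' i, f i y) x = ∑' i, orbitMean H (f i) x := by
  simp only [orbitMean, ENNReal.tsum_mul_left]
  rw [ENNReal.tsum_comm]

lemma IsPeriodic.orbitMean_mul (hg : IsPeriodic H g) (f : G → ℝ≥0∞) (x : G) :
    orbitMean H (fun y ↦ g y * f y) x = g x * orbitMean H f x := by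
  simp only [orbitMean, fun h : H ↦ hg h h.2 x, ENNReal.tsum_mul_left]
  ring

lemma orbitMean_const_mul (c : ℝ≥0∞) (f : G → ℝ≥0∞) (x : G) :
    orbitMean H (fun y ↦ c * f y) x = c * orbitMean H f x :=
  IsPeriodic.orbitMean_mul (g := fun _ ↦ c) (fun _ _ _ ↦ rfl) f x

lemma orbitMean_orbitMean_comm (f : G → ℝ≥0∞) :
    orbitMean H (orbitMean K f) = orbitMean K (orbitMean H f) := by
  ext x
  simp only [orbitMean, ENNReal.tsum_mul_left]
  rw [ENNReal.tsum_comm]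
  simp only [add_right_comm x]
  ring

section Finite

variable [Finite H]

lemma inv_natCard_mul_natCard (H : AddSubgroup G) [Finite H] :
    (Nat.card H : ℝ≥0∞)⁻¹ * Nat.card H = 1 :=
  ENNReal.inv_mul_cancel (by exact_mod_cast Nat.card_pos.ne') (ENNReal.natCast_ne_top _)

lemma IsPeriodic.orbitMean_eq (hf : IsPeriodic H f) : orbitMean H f = f := by
  ext x
  simp only [orbitMean, fun h : H ↦ hf h h.2 x, ENNReal.tsum_const, ENat.card_eq_coe_natCard,
    ENat.toENNReal_coe, ← mul_assoc, inv_natCard_mul_natCard, one_mul]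

lemma orbitMean_const (c : ℝ≥0∞) (x : G) : orbitMean H (fun _ ↦ c) x = c :=
  congrFun (IsPeriodic.orbitMean_eq fun _ _ _ ↦ rfl) x

lemma orbitMean_le_const {M : ℝ≥0∞} (hf : ∀ x, f x ≤ M) (x : G) : orbitMean H f x ≤ M :=
  (orbitMean_mono hf x).trans_eq (orbitMean_const M x)

lemma orbitMean_bot (f : G → ℝ≥0∞) : orbitMean ⊥ f = f :=
  IsPeriodic.orbitMean_eq fun h hh ↦ by
    rw [AddSubgroup.mem_bot.1 hh]
    exact fun x ↦ congrArg f (add_zero x)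

lemma orbitMean_orbitMean_of_le (hHK : H ≤ K) (f : G → ℝ≥0∞) :
    orbitMean K (orbitMean H f) = orbitMean K f := by
  rw [orbitMean_orbitMean_comm, ((orbitMean_isPeriodic K f).of_le hHK).orbitMean_eq]

variable [Finite K]

instance finite_addSubgroup_sup : Finite ↥(H ⊔ K) := by
  refine Set.Finite.subset ((Set.toFinite (H : Set G)).add (Set.toFinite (K : Set G))) ?_
  intro x hx
  exact Set.mem_add.2 (AddSubgroup.mem_sup.1 hx)

/-- The composition is periodic under `H` and under `K`, hence fixed by the mean over `H ⊔ K`,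
which in turn absorbs both means. -/
lemma orbitMean_orbitMean (f : G → ℝ≥0∞) :
    orbitMean H (orbitMean K f) = orbitMean (H ⊔ K) f := by
  have hper : IsPeriodic (H ⊔ K) (orbitMean H (orbitMean K f)) :=
    (orbitMean_isPeriodic H _).sup (orbitMean_isPeriodic K f).orbitMean_right
  rw [← hper.orbitMean_eq, orbitMean_orbitMean_of_le le_sup_left,
    orbitMean_orbitMean_of_le le_sup_right]

end Finite

instance finite_addSubgroup_finsetSup {ι : Type*} (H : ι → AddSubgroup G) [∀ i, Finite (H i)]
    (s : Finset ι) : Finite ↥(s.sup H) :=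
  Finset.sup_induction (p := fun K : AddSubgroup G ↦ Finite K) inferInstance
    (fun _ _ _ _ ↦ finite_addSubgroup_sup) fun _ _ ↦ inferInstance

/-! ### Integration of orbit means -/

variable [MeasurableSpace G] [MeasurableAdd G] {μ : Measure G}

lemma measurable_orbitMean [Finite H] (hf : Measurable f) : Measurable (orbitMean H f) := by
  unfold orbitMean
  exact (Measurable.tsum fun h : H ↦ hf.comp (measurable_add_const _)).const_mul _

variable [μ.IsAddRightInvariant]

lemma lintegral_orbitMean [Finite H] (hf : Measurable f) :
    ∫⁻ x, orbitMean H f x ∂μ = ∫⁻ x, f x ∂μ := by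
  have hshift (h : H) : Measurable fun x ↦ f (x + h) := hf.comp (measurable_add_const _)
  unfold orbitMean
  rw [lintegral_const_mul _ (Measurable.tsum hshift),
    lintegral_tsum fun h ↦ (hshift h).aemeasurable]
  simp only [lintegral_add_right_eq_self (μ := μ) f, ENNReal.tsum_const,
    ENat.card_eq_coe_natCard, ENat.toENNReal_coe, ← mul_assoc, inv_natCard_mul_natCard, one_mul]

lemma IsPeriodic.lintegral_mul_orbitMean [Finite H] (hg : IsPeriodic H g) (hgm : Measurable g)
    (hf : Measurable f) : ∫⁻ x, g x * orbitMean H f x ∂μ = ∫⁻ x, g x * f x ∂μ := by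
  simp only [← hg.orbitMean_mul]
  exact lintegral_orbitMean (hgm.mul hf)

lemma mul_measure_lt_orbitMean_le_setLIntegral [Finite H] (hf : Measurable f) (ε : ℝ≥0∞) :
    ε * μ {x | ε < orbitMean H f x} ≤ ∫⁻ x in {x | ε < orbitMean H f x}, f x ∂μ := by
  set S : Set G := {x | ε < orbitMean H f x}
  have hS : MeasurableSet S := measurableSet_lt measurable_const (measurable_orbitMean hf)
  have hper : IsPeriodic H (S.indicator 1 : G → ℝ≥0∞) :=
    (orbitMean_isPeriodic H f).comp ((Ioi ε).indicator 1)
  calc ε * μ S = ∫⁻ _ in S, ε ∂μ := (setLIntegral_const S ε).symm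
    _ ≤ ∫⁻ x in S, orbitMean H f x ∂μ :=
        setLIntegral_mono (measurable_orbitMean hf) fun _ hx ↦ le_of_lt hx
    _ = ∫⁻ x in S, f x ∂μ := by
        rw [← lintegral_indicator_one_mul hS, ← lintegral_indicator_one_mul hS,
          hper.lintegral_mul_orbitMean (measurable_one.indicator hS) hf]

lemma mul_measure_exists_lt_orbitMean_le {K : ℕ → AddSubgroup G} [∀ l, Finite (K l)]
    (hK : Monotone K) (L : ℕ) (hf : Measurable f) (ε : ℝ≥0∞) :
    ε * μ {x | ∃ l < L, ε < orbitMean (K l) f x} ≤ ∫⁻ x, f x ∂μ := by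
  induction L generalizing f with
  | zero => simp
  | succ L ih =>
    set S : Set G := {x | ε < orbitMean (K L) f x}
    have hS : MeasurableSet S := measurableSet_lt measurable_const (measurable_orbitMean hf)
    -- Off the `K L`-periodic set `S`, the earlier means do not see the values of `f` on `S`.
    have hper (l) (hl : l ≤ L) : IsPeriodic (K l) (Sᶜ.indicator 1 : G → ℝ≥0∞) :=
      ((orbitMean_isPeriodic (K L) f).comp ((Ioi ε)ᶜ.indicator 1)).of_le (hK hl)
    have hcover : {x | ∃ l < L + 1, ε < orbitMean (K l) f x} ⊆
        S ∪ {x | ∃ l < L, ε < orbitMean (K l) (fun y ↦ Sᶜ.indicator 1 y * f y) x} := by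
      rintro x ⟨l, hl, hx⟩
      by_cases hxS : x ∈ S
      · exact Or.inl hxS
      · have hlL : l < L := lt_of_le_of_ne (Nat.lt_succ_iff.1 hl) (by rintro rfl; exact hxS hx)
        refine Or.inr ⟨l, hlL, ?_⟩
        rwa [(hper l hlL.le).orbitMean_mul, indicator_of_mem (by exact hxS), Pi.one_apply, one_mul]
    calc ε * μ {x | ∃ l < L + 1, ε < orbitMean (K l) f x}
        ≤ ε * μ S +
          ε * μ {x | ∃ l < L, ε < orbitMean (K l) (fun y ↦ Sᶜ.indicator 1 y * f y) x} := by
          rw [← mul_add]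
          gcongr
          exact (measure_mono hcover).trans (measure_union_le _ _)
      _ ≤ (∫⁻ x in S, f x ∂μ) + ∫⁻ x, Sᶜ.indicator 1 x * f x ∂μ :=
          add_le_add (mul_measure_lt_orbitMean_le_setLIntegral hf ε)
            (ih ((measurable_one.indicator hS.compl).mul hf))
      _ = (∫⁻ x in S, f x ∂μ) + ∫⁻ x in Sᶜ, f x ∂μ := by
          rw [lintegral_indicator_one_mul hS.compl]
      _ = ∫⁻ x, f x ∂μ := lintegral_add_compl f hS

theorem mul_measure_exists_lt_orbitMean_le_lintegral {K : ℕ → AddSubgroup G}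
    [∀ l, Finite (K l)] (hK : Monotone K) (hf : Measurable f) (ε : ℝ≥0∞) :
    ε * μ {x | ∃ l, ε < orbitMean (K l) f x} ≤ ∫⁻ x, f x ∂μ := by
  have hUnion : {x | ∃ l, ε < orbitMean (K l) f x} =
      ⋃ L : ℕ, {x | ∃ l < L, ε < orbitMean (K l) f x} := by
    ext x
    simp only [mem_iUnion, mem_ofPred_eq]
    exact ⟨fun ⟨l, hl⟩ ↦ ⟨l + 1, l, l.lt_succ_self, hl⟩, fun ⟨_, l, _, hl⟩ ↦ ⟨l, hl⟩⟩
  have hmono : Monotone fun L : ℕ ↦ {x | ∃ l < L, ε < orbitMean (K l) f x} :=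
    fun _ _ hLL' _ ⟨l, hl, hx⟩ ↦ ⟨l, hl.trans_le hLL', hx⟩
  rw [hUnion, hmono.measure_iUnion, ENNReal.mul_iSup]
  exact iSup_le fun L ↦ mul_measure_exists_lt_orbitMean_le hK L hf ε

end OrbitMean

section Entropy

/-- The entropy integrand `u log (1 + a u)` on `ℝ≥0∞`. It is only used for finite `u`, where
`toReal` is harmless. -/
noncomputable def entropy (a : ℝ) (u : ℝ≥0∞) : ℝ≥0∞ :=
  u * ENNReal.ofReal (Real.log (1 + a * u.toReal))

/-- The derivative of `entropy a` at a finite `u`. -/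
noncomputable def entropySlope (a : ℝ) (u : ℝ≥0∞) : ℝ≥0∞ :=
  ENNReal.ofReal (Real.log (1 + a * u.toReal) + a * u.toReal / (1 + a * u.toReal))

/-- The part of a mean `u` that is lost when averaging further brings it down to `v < e^{-t} u`;
values of `u` below the threshold `e^t / a` are discarded. -/
noncomputable def excess (a t : ℝ) (u v : ℝ≥0∞) : ℝ≥0∞ :=
  if ENNReal.ofReal (Real.exp t) * v < u ∧ ENNReal.ofReal (Real.exp t / a) < u then u else 0

lemma le_excess_add (a t : ℝ) (u v : ℝ≥0∞) :
    u ≤ excess a t u v + (ENNReal.ofReal (Real.exp t) * v + ENNReal.ofReal (Real.exp t / a)) := by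
  unfold excess
  split_ifs with h
  · exact le_self_add
  · rw [zero_add]
    rcases not_and_or.1 h with h | h
    · exact (not_lt.1 h).trans le_self_add
    · exact (not_lt.1 h).trans le_add_self

variable {a t : ℝ}

lemma mul_log_tangent_le {u v : ℝ} (ha : 0 ≤ a) (hu : 0 ≤ u) (hv : 0 ≤ v) :
    v * Real.log (1 + a * v) + (Real.log (1 + a * v) + a * v / (1 + a * v)) * (u - v) ≤
      u * Real.log (1 + a * u) := by
  have hpu : 0 < 1 + a * u := by positivity
  have hpv : 0 < 1 + a * v := by positivity
  have hlog : 1 - (1 + a * v) / (1 + a * u) ≤ Real.log (1 + a * u) - Real.log (1 + a * v) := by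
    have := Real.one_sub_inv_le_log_of_pos (div_pos hpu hpv)
    rwa [inv_div, Real.log_div hpu.ne' hpv.ne'] at this
  have hgap : u * (1 - (1 + a * v) / (1 + a * u)) - a * v / (1 + a * v) * (u - v) =
      a * (u - v) ^ 2 / ((1 + a * u) * (1 + a * v)) := by
    field_simp
    ring
  have hgap_nonneg : 0 ≤ a * (u - v) ^ 2 / ((1 + a * u) * (1 + a * v)) := by positivity
  linarith [mul_le_mul_of_nonneg_left hlog hu]

/-- A drop by the factor `e^t` improves the tangent line inequality by `t u / 2`. -/
lemma half_mul_add_mul_log_tangent_le {u v : ℝ} (ha : 0 < a) (ht : 4 ≤ t) (hv : 0 ≤ v)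
    (hvu : Real.exp t * v < u) (hau : Real.exp t / a < u) :
    t / 2 * u + (v * Real.log (1 + a * v) +
      (Real.log (1 + a * v) + a * v / (1 + a * v)) * (u - v)) ≤ u * Real.log (1 + a * u) := by
  have hpv : 0 < 1 + a * v := by positivity
  have hu : 0 ≤ u := (by positivity : 0 ≤ Real.exp t * v).trans hvu.le
  have hratio_nonneg : 0 ≤ a * v / (1 + a * v) := by positivity
  have hratio_le : a * v / (1 + a * v) ≤ 1 := (div_le_one hpv).2 (by linarith)
  have hlog_drop : t - Real.log 2 + Real.log (1 + a * v) ≤ Real.log (1 + a * u) := by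
    have hexp : Real.exp t < u * a := (div_lt_iff₀ ha).1 hau
    have hexpv : Real.exp t * (a * v) ≤ u * a := by nlinarith
    calc t - Real.log 2 + Real.log (1 + a * v) = Real.log (Real.exp t / 2 * (1 + a * v)) := by
          rw [Real.log_mul (by positivity) hpv.ne', Real.log_div (Real.exp_pos t).ne' two_ne_zero,
            Real.log_exp]
      _ ≤ Real.log (1 + a * u) := Real.log_le_log (by positivity) (by linarith)
  have hslope : t / 2 + Real.log (1 + a * v) + a * v / (1 + a * v) ≤ Real.log (1 + a * u) := by
    linarith [Real.log_two_lt_d9]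
  nlinarith [mul_le_mul_of_nonneg_left hslope hu, mul_nonneg hratio_nonneg hv]

lemma half_mul_excess_add_entropy_le {u v : ℝ≥0∞} (ha : 0 < a) (ht : 4 ≤ t) (hu : u ≠ ∞)
    (hv : v ≠ ∞) :
    ENNReal.ofReal (t / 2) * excess a t u v + entropy a v + entropySlope a v * u ≤
      entropy a u + entropySlope a v * v := by
  lift u to NNReal using hu
  lift v to NNReal using hv
  have hlog (w : NNReal) : 0 ≤ Real.log (1 + a * w) := Real.log_nonneg (by
    linarith [mul_nonneg ha.le w.coe_nonneg])
  have hslope : 0 ≤ Real.log (1 + a * v) + a * v / (1 + a * v) := by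
    have := hlog v
    positivity
  have hu_nonneg := mul_nonneg u.coe_nonneg (hlog u)
  have hv_nonneg := mul_nonneg v.coe_nonneg (hlog v)
  have hslope_u := mul_nonneg hslope u.coe_nonneg
  have hslope_v := mul_nonneg hslope v.coe_nonneg
  simp only [entropy, entropySlope, excess, ENNReal.coe_toReal]
  simp only [← ENNReal.ofReal_coe_nnreal]
  simp only [← ENNReal.ofReal_mul u.coe_nonneg, ← ENNReal.ofReal_mul v.coe_nonneg,
    ← ENNReal.ofReal_mul hslope, ← ENNReal.ofReal_mul (Real.exp_pos t).le,
    ENNReal.ofReal_lt_ofReal_iff', ← ENNReal.ofReal_add hu_nonneg hslope_v]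
  split_ifs with h
  · have ht_u : 0 ≤ t / 2 * u := by positivity
    rw [← ENNReal.ofReal_mul (by linarith), ← ENNReal.ofReal_add ht_u hv_nonneg,
      ← ENNReal.ofReal_add (add_nonneg ht_u hv_nonneg) hslope_u]
    refine ENNReal.ofReal_le_ofReal ?_
    linarith [half_mul_add_mul_log_tangent_le ha ht v.coe_nonneg h.1.1 h.2.1]
  · rw [mul_zero, zero_add, ← ENNReal.ofReal_add hv_nonneg hslope_u]
    refine ENNReal.ofReal_le_ofReal ?_
    linarith [mul_log_tangent_le ha.le u.coe_nonneg v.coe_nonneg]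

lemma measurable_entropy (a : ℝ) : Measurable (entropy a) := by
  unfold entropy
  fun_prop

lemma measurable_entropySlope (a : ℝ) : Measurable (entropySlope a) := by
  unfold entropySlope
  fun_prop

lemma measurable_excess (a t : ℝ) : Measurable fun p : ℝ≥0∞ × ℝ≥0∞ ↦ excess a t p.1 p.2 := by
  unfold excess
  refine Measurable.ite ?_ measurable_fst measurable_const
  exact (measurableSet_lt (measurable_snd.const_mul _) measurable_fst).inter
    (measurableSet_lt measurable_const measurable_fst)

lemma entropySlope_le {u M : ℝ≥0∞} (ha : 0 ≤ a) (huM : u ≤ M) (hM : M ≠ ∞) :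
    entropySlope a u ≤ ENNReal.ofReal (Real.log (1 + a * M.toReal) + 1) := by
  have : 0 ≤ a * u.toReal := by positivity
  have huM' : u.toReal ≤ M.toReal := ENNReal.toReal_mono hM huM
  unfold entropySlope
  gcongr
  exact (div_le_one (by positivity)).2 (by linarith)

variable {G : Type*} [AddCommGroup G] [MeasurableSpace G] [MeasurableAdd G] {μ : Measure G}
  [μ.IsAddRightInvariant] {f : G → ℝ≥0∞} {M : ℝ≥0∞}

lemma half_mul_lintegral_excess_add_le (ha : 0 < a) (ht : 4 ≤ t) {H K : AddSubgroup G}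
    [Finite H] [Finite K] (hHK : H ≤ K) (hf : Measurable f) (hfM : ∀ x, f x ≤ M) (hM : M ≠ ∞)
    (hfint : ∫⁻ x, f x ∂μ ≠ ∞) :
    ENNReal.ofReal (t / 2) * ∫⁻ x, excess a t (orbitMean H f x) (orbitMean K f x) ∂μ +
        ∫⁻ x, entropy a (orbitMean K f x) ∂μ ≤ ∫⁻ x, entropy a (orbitMean H f x) ∂μ := by
  have hmH : Measurable (orbitMean H f) := measurable_orbitMean hf
  have hmK : Measurable (orbitMean K f) := measurable_orbitMean hf
  have hslope : Measurable fun x ↦ entropySlope a (orbitMean K f x) :=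
    (measurable_entropySlope a).comp hmK
  have hslope_mul (J : AddSubgroup G) [Finite J] :
      Measurable fun x ↦ entropySlope a (orbitMean K f x) * orbitMean J f x :=
    hslope.mul (measurable_orbitMean hf)
  have hentropy : Measurable fun x ↦ entropy a (orbitMean K f x) :=
    (measurable_entropy a).comp hmK
  have hexcess : Measurable fun x ↦ excess a t (orbitMean H f x) (orbitMean K f x) :=
    (measurable_excess a t).comp (hmH.prodMk hmK)
  have hper : IsPeriodic K fun x ↦ entropySlope a (orbitMean K f x) :=
    (orbitMean_isPeriodic K f).comp _
  have hfin : ∫⁻ x, entropySlope a (orbitMean K f x) * f x ∂μ ≠ ∞ := by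
    set C := ENNReal.ofReal (Real.log (1 + a * M.toReal) + 1)
    refine ne_top_of_le_ne_top (b := C * ∫⁻ x, f x ∂μ)
      (ENNReal.mul_ne_top ENNReal.ofReal_ne_top hfint) ?_
    rw [← lintegral_const_mul _ hf]
    gcongr with x
    exact entropySlope_le ha.le (orbitMean_le_const hfM x) hM
  have hpointwise := lintegral_mono (μ := μ) fun x ↦ half_mul_excess_add_entropy_le ha ht
    (ne_top_of_le_ne_top hM (orbitMean_le_const (H := H) hfM x))
    (ne_top_of_le_ne_top hM (orbitMean_le_const (H := K) hfM x))
  rw [lintegral_add_right _ (hslope_mul H), lintegral_add_right _ hentropy,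
    lintegral_add_right _ (hslope_mul K), lintegral_const_mul _ hexcess,
    (hper.of_le hHK).lintegral_mul_orbitMean hslope hf, hper.lintegral_mul_orbitMean hslope hf]
    at hpointwise
  exact (ENNReal.add_le_add_iff_right hfin).1 hpointwise

/-- The entropy of `orbitMean (K j) f` decreases in `j` and pays for the excess at each step. -/
lemma half_mul_tsum_lintegral_excess_le (ha : 0 < a) (ht : 4 ≤ t) {K : ℕ → AddSubgroup G}
    [∀ j, Finite (K j)] (hK : Monotone K) (hf : Measurable f) (hfM : ∀ x, f x ≤ M) (hM : M ≠ ∞)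
    (hfint : ∫⁻ x, f x ∂μ ≠ ∞) :
    ENNReal.ofReal (t / 2) *
        ∑' j, ∫⁻ x, excess a t (orbitMean (K j) f x) (orbitMean (K (j + 1)) f x) ∂μ ≤
      ∫⁻ x, entropy a (orbitMean (K 0) f x) ∂μ := by
  have htelescope (J : ℕ) : ∑ j ∈ Finset.range J, ENNReal.ofReal (t / 2) *
        ∫⁻ x, excess a t (orbitMean (K j) f x) (orbitMean (K (j + 1)) f x) ∂μ +
      ∫⁻ x, entropy a (orbitMean (K J) f x) ∂μ ≤ ∫⁻ x, entropy a (orbitMean (K 0) f x) ∂μ := by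
    induction J with
    | zero => simp
    | succ J ih =>
      rw [Finset.sum_range_succ, add_assoc]
      refine le_trans ?_ ih
      gcongr
      exact half_mul_lintegral_excess_add_le ha ht (hK J.le_succ) hf hfM hM hfint
  rw [← ENNReal.tsum_mul_left]
  exact ENNReal.tsum_le_of_sum_range_le fun J ↦ le_self_add.trans (htelescope J)

end Entropy

section Layer

/-- The drop exponent `t_s` used on the `s`-th layer. -/
noncomputable def layerExponent (s : ℕ) : ℝ := 2 ^ (s + 2)

/-- The lower end `a_s` of the `s`-th layer. It is doubly exponential in the drop exponent `t_s`, so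
that `t_s` is comparable to the `log log` in the denominator of `Φ` on the whole layer. -/
noncomputable def layerLevel (s : ℕ) : ℝ := Real.exp (Real.exp (2 * layerExponent s))

/-- The number `y` if it lies in the `s`-th layer `[a_s, a_{s+1})`, and `0` otherwise. -/
noncomputable def layer (s : ℕ) (y : ℝ) : ℝ≥0∞ :=
  (Ico (layerLevel s) (layerLevel (s + 1))).indicator ENNReal.ofReal y

lemma four_le_layerExponent (s : ℕ) : 4 ≤ layerExponent s := by
  have : (1 : ℝ) ≤ 2 ^ s := one_le_pow₀ one_le_two
  rw [layerExponent, pow_add]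
  linarith

lemma layerExponent_succ (s : ℕ) : layerExponent (s + 1) = 2 * layerExponent s := by
  unfold layerExponent
  ring

lemma layerLevel_pos (s : ℕ) : 0 < layerLevel s := Real.exp_pos _

lemma monotone_layerLevel : Monotone layerLevel := by
  refine monotone_nat_of_le_succ fun s ↦ ?_
  unfold layerLevel
  rw [layerExponent_succ]
  gcongr
  linarith [four_le_layerExponent s]

lemma natCast_lt_layerLevel (s : ℕ) : (s : ℝ) < layerLevel s := by
  have hs : (s : ℝ) < layerExponent s := by
    unfold layerExponent
    exact_mod_cast Nat.lt_two_pow_self.trans (Nat.pow_lt_pow_right one_lt_two (by omega))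
  unfold layerLevel
  linarith [Real.add_one_le_exp (Real.exp (2 * layerExponent s)),
    Real.add_one_le_exp (2 * layerExponent s), four_le_layerExponent s]

lemma exists_mem_layer {y : ℝ} (hy : layerLevel 0 ≤ y) :
    ∃ s, y ∈ Ico (layerLevel s) (layerLevel (s + 1)) := by
  have hunbounded : ¬BddAbove (range layerLevel) := by
    rintro ⟨b, hb⟩
    obtain ⟨n, hn⟩ := exists_nat_gt b
    exact (hn.trans (natCast_lt_layerLevel n)).not_ge (hb (mem_range_self n))
  have hcover := iUnion_Ico_map_succ_eq_Ici (fun s ↦ monotone_layerLevel (Nat.zero_le s)) hunbounded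
  exact mem_iUnion.1 (hcover.ge hy)

lemma layer_le (s : ℕ) (y : ℝ) : layer s y ≤ ENNReal.ofReal (layerLevel (s + 1)) :=
  indicator_apply_le' (fun hy ↦ ENNReal.ofReal_le_ofReal hy.2.le) fun _ ↦ zero_le

lemma ofReal_le_add_tsum_layer (y : ℝ) :
    ENNReal.ofReal y ≤ ENNReal.ofReal (layerLevel 0) + ∑' s, layer s y := by
  rcases le_or_gt (layerLevel 0) y with hy | hy
  · obtain ⟨s, hs⟩ := exists_mem_layer hy
    calc ENNReal.ofReal y = layer s y := (indicator_of_mem hs _).symm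
      _ ≤ ∑' s, layer s y := ENNReal.le_tsum s
      _ ≤ ENNReal.ofReal (layerLevel 0) + ∑' s, layer s y := le_add_self
  · exact (ENNReal.ofReal_le_ofReal hy.le).trans le_self_add

lemma tsum_exp_layerExponent_div_layerLevel_le :
    ∑' s, ENNReal.ofReal (Real.exp (layerExponent s) / layerLevel s) ≤ 1 := by
  have hterm (s : ℕ) : Real.exp (layerExponent s) / layerLevel s ≤ 2⁻¹ ^ (s + 1) := by
    have hdouble : (2 : ℝ) ^ (s + 1) ≤ layerExponent s :=
      pow_le_pow_right₀ one_le_two (by omega)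
    calc Real.exp (layerExponent s) / layerLevel s
        = Real.exp (layerExponent s - Real.exp (2 * layerExponent s)) := (Real.exp_sub _ _).symm
      _ ≤ Real.exp (-layerExponent s) := by
          gcongr
          linarith [Real.add_one_le_exp (2 * layerExponent s)]
      _ = (Real.exp (layerExponent s))⁻¹ := Real.exp_neg _
      _ ≤ (2 ^ (s + 1))⁻¹ := by
          gcongr
          linarith [Real.add_one_le_exp (layerExponent s)]
      _ = 2⁻¹ ^ (s + 1) := (inv_pow _ _).symm
  calc ∑' s, ENNReal.ofReal (Real.exp (layerExponent s) / layerLevel s)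
      ≤ ∑' s, ENNReal.ofReal (2⁻¹ ^ (s + 1)) :=
        ENNReal.tsum_le_tsum fun s ↦ ENNReal.ofReal_le_ofReal (hterm s)
    _ = ∑' s : ℕ, (2⁻¹ : ℝ≥0∞) ^ (s + 1) := by
        simp only [ENNReal.ofReal_pow (inv_nonneg.2 zero_le_two),
          ENNReal.ofReal_inv_of_pos two_pos, ENNReal.ofReal_ofNat]
    _ = 1 := by
        rw [ENNReal.tsum_geometric_add_one, ENNReal.one_sub_inv_two, inv_inv]
        exact ENNReal.inv_mul_cancel two_ne_zero ENNReal.ofNat_ne_top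

variable {α : Type*}

/-- The layers of `F`, each weighted by the largest drop `e^{t_s}` not counted in its excess. -/
noncomputable def weightedLayers (F : α → ℝ) (x : α) : ℝ≥0∞ :=
  ∑' s, ENNReal.ofReal (Real.exp (layerExponent s)) * layer s (F x)

variable [MeasurableSpace α] {F : α → ℝ}

lemma measurable_layer (hF : Measurable F) (s : ℕ) : Measurable fun x ↦ layer s (F x) :=
  (ENNReal.measurable_ofReal.indicator measurableSet_Ico).comp hF

lemma measurable_weightedLayers (hF : Measurable F) : Measurable (weightedLayers F) :=
  Measurable.tsum fun s ↦ (measurable_layer hF s).const_mul _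

variable {t y : ℝ}

lemma exp_two_mul_eq_sq (t : ℝ) : Real.exp (2 * t) = Real.exp t ^ 2 := by
  rw [← Real.exp_nat_mul, Nat.cast_ofNat]

lemma thirty_six_lt_exp_two_mul (ht : 4 ≤ t) : 36 < Real.exp (2 * t) := by
  have hfour : (36 : ℝ) < 2.7182818283 ^ 8 := by norm_num
  calc (36 : ℝ) < 2.7182818283 ^ 8 := hfour
    _ ≤ Real.exp 1 ^ 8 := by gcongr; exact Real.exp_one_gt_d9.le
    _ = Real.exp 8 := by rw [← Real.exp_nat_mul]; norm_num
    _ ≤ Real.exp (2 * t) := by gcongr; linarith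

lemma thirty_six_lt_of_exp_exp_le (ht : 4 ≤ t) (hy : Real.exp (Real.exp (2 * t)) ≤ y) :
    36 < y := by
  linarith [Real.add_one_le_exp (Real.exp (2 * t)), thirty_six_lt_exp_two_mul ht]

lemma exp_mul_add_mul_log_le (ht : 4 ≤ t) (hy : Real.exp (Real.exp (2 * t)) ≤ y) :
    Real.exp t * y + 2 / t * (y * Real.log (1 + Real.exp (Real.exp (2 * t)) * y)) ≤
      7 * (y * Real.log y) / t := by
  have ht0 : 0 < t := by linarith
  have hy0 : 0 < y := (Real.exp_pos _).trans_le hy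
  have hy36 := thirty_six_lt_of_exp_exp_le ht hy
  have hexp : Real.exp t ≤ Real.log y / t := by
    rw [le_div_iff₀ ht0]
    calc Real.exp t * t ≤ Real.exp t * Real.exp t := by
          gcongr
          linarith [Real.add_one_le_exp t]
      _ = Real.exp (2 * t) := by rw [exp_two_mul_eq_sq, sq]
      _ ≤ Real.log y := (Real.le_log_iff_exp_le hy0).2 hy
  have hlog : Real.log (1 + Real.exp (Real.exp (2 * t)) * y) ≤ 3 * Real.log y :=
    calc Real.log (1 + Real.exp (Real.exp (2 * t)) * y) ≤ Real.log (1 + y * y) := by gcongr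
      _ ≤ Real.log (y ^ 3) := Real.log_le_log (by positivity) (by nlinarith [mul_pos hy0 hy0])
      _ = 3 * Real.log y := by rw [Real.log_pow, Nat.cast_ofNat]
  calc Real.exp t * y + 2 / t * (y * Real.log (1 + Real.exp (Real.exp (2 * t)) * y))
      ≤ Real.log y / t * y + 2 / t * (y * (3 * Real.log y)) := by gcongr
    _ = 7 * (y * Real.log y) / t := by ring

lemma exp_one_le_log (ht : 4 ≤ t) (hy : Real.exp (Real.exp (2 * t)) ≤ y) :
    Real.exp 1 ≤ Real.log (3 + 35 * y) := by
  have hy0 : 0 < y := (Real.exp_pos _).trans_le hy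
  calc Real.exp 1 ≤ Real.exp (2 * t) := by gcongr; linarith
    _ ≤ Real.log y := (Real.le_log_iff_exp_le hy0).2 hy
    _ ≤ Real.log (3 + 35 * y) := Real.log_le_log hy0 (by linarith)

lemma log_log_le_five_mul (ht : 4 ≤ t) (hy : Real.exp (Real.exp (2 * t)) ≤ y)
    (hy' : y ≤ Real.exp (Real.exp (4 * t))) : Real.log (Real.log (3 + 35 * y)) ≤ 5 * t := by
  have hy36 := thirty_six_lt_of_exp_exp_le ht hy
  have hy0 : 0 < y := by linarith
  rw [Real.log_le_iff_le_exp ((Real.exp_pos 1).trans_le (exp_one_le_log ht hy))]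
  have hlog : Real.log y ≤ Real.exp (4 * t) := (Real.log_le_iff_le_exp hy0).2 hy'
  calc Real.log (3 + 35 * y) ≤ Real.log (y ^ 2) := Real.log_le_log (by positivity) (by nlinarith)
    _ = 2 * Real.log y := by rw [Real.log_pow, Nat.cast_ofNat]
    _ ≤ 2 * Real.exp (4 * t) := by gcongr
    _ ≤ Real.exp t * Real.exp (4 * t) := by
        gcongr
        linarith [Real.add_one_le_exp t]
    _ = Real.exp (5 * t) := by rw [← Real.exp_add]; ring_nf

lemma mul_log_div_le_phiE (ht : 4 ≤ t) (hy : Real.exp (Real.exp (2 * t)) ≤ y)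
    (hy' : y ≤ Real.exp (Real.exp (4 * t))) : 7 * (y * Real.log y) / t ≤ PhiE (35 * y) := by
  have hy0 : 0 < y := (Real.exp_pos _).trans_le hy
  have hlog_nonneg : 0 ≤ Real.log (1 + 35 * y) := Real.log_nonneg (by linarith)
  have hloglog_pos : 0 < Real.log (Real.log (3 + 35 * y)) :=
    Real.log_pos ((Real.one_lt_exp_iff.2 one_pos).trans_le (exp_one_le_log ht hy))
  calc 7 * (y * Real.log y) / t = 35 * y * Real.log y / (5 * t) := by
        have : 0 < t := by linarith
        field_simp
        ring
    _ ≤ 35 * y * Real.log (1 + 35 * y) / (5 * t) := by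
        gcongr
        linarith
    _ ≤ 35 * y * Real.log (1 + 35 * y) / Real.log (Real.log (3 + 35 * y)) := by
        gcongr
        exact log_log_le_five_mul ht hy hy'

lemma tsum_exp_mul_layer_add_entropy_le (y : ℝ) :
    ∑' s, (ENNReal.ofReal (Real.exp (layerExponent s)) * layer s y +
        ENNReal.ofReal (2 / layerExponent s) * entropy (layerLevel s) (layer s y)) ≤
      ENNReal.ofReal (PhiE (35 * y)) := by
  by_cases hy : ∃ s, y ∈ Ico (layerLevel s) (layerLevel (s + 1))
  · obtain ⟨s, hs⟩ := hy
    have hzero (r : ℕ) (hr : r ≠ s) : layer r y = 0 := by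
      refine indicator_of_notMem (fun hyr ↦ ?_) _
      exact (monotone_layerLevel.pairwise_disjoint_on_Ico_succ hr).le_bot ⟨hyr, hs⟩
    rw [tsum_eq_single s fun r hr ↦ by
      simp only [hzero r hr, entropy, mul_zero, zero_mul, add_zero]]
    have ht := four_le_layerExponent s
    have hy0 : 0 < y := (layerLevel_pos s).trans_le hs.1
    have ha := layerLevel_pos s
    have hlog : 0 ≤ Real.log (1 + layerLevel s * y) := Real.log_nonneg (by nlinarith)
    have hlayer : layer s y = ENNReal.ofReal y := indicator_of_mem hs _
    have hupper : y ≤ Real.exp (Real.exp (4 * layerExponent s)) :=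
      hs.2.le.trans_eq (by rw [layerLevel, layerExponent_succ]; ring_nf)
    rw [entropy, hlayer, ENNReal.toReal_ofReal hy0.le, ← ENNReal.ofReal_mul hy0.le,
      ← ENNReal.ofReal_mul (by positivity), ← ENNReal.ofReal_mul (by positivity),
      ← ENNReal.ofReal_add (by positivity) (by positivity)]
    exact ENNReal.ofReal_le_ofReal
      ((exp_mul_add_mul_log_le ht hs.1).trans (mul_log_div_le_phiE ht hs.1 hupper))
  · have hzero (s : ℕ) : layer s y = 0 := indicator_of_notMem (not_exists.1 hy s) _
    simp only [hzero, entropy, mul_zero, zero_mul, add_zero, tsum_zero, zero_le]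

end Layer

section WeakType

variable {G : Type*} [AddCommGroup G]

/-- The total excess, over all layers of `F`, of the `A`-means over the `B`-means. -/
noncomputable def layeredExcess (A B : AddSubgroup G) (F : G → ℝ) (x : G) : ℝ≥0∞ :=
  ∑' s, excess (layerLevel s) (layerExponent s) (orbitMean A (fun y ↦ layer s (F y)) x)
    (orbitMean B (fun y ↦ layer s (F y)) x)

lemma orbitMean_ofReal_le_layered (A B : AddSubgroup G) [Finite A] (F : G → ℝ) (x : G) :
    orbitMean A (fun y ↦ ENNReal.ofReal (F y)) x ≤ ENNReal.ofReal (layerLevel 0) +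
      (layeredExcess A B F x + (orbitMean B (weightedLayers F) x + 1)) := by
  calc orbitMean A (fun y ↦ ENNReal.ofReal (F y)) x
      ≤ orbitMean A (fun y ↦ ENNReal.ofReal (layerLevel 0) + ∑' s, layer s (F y)) x :=
        orbitMean_mono (fun y ↦ ofReal_le_add_tsum_layer (F y)) x
    _ = ENNReal.ofReal (layerLevel 0) + ∑' s, orbitMean A (fun y ↦ layer s (F y)) x := by
        rw [orbitMean_add, orbitMean_const, orbitMean_tsum]
    _ ≤ ENNReal.ofReal (layerLevel 0) + ∑' s,
          (excess (layerLevel s) (layerExponent s) (orbitMean A (fun y ↦ layer s (F y)) x)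
            (orbitMean B (fun y ↦ layer s (F y)) x) +
          (ENNReal.ofReal (Real.exp (layerExponent s)) * orbitMean B (fun y ↦ layer s (F y)) x +
            ENNReal.ofReal (Real.exp (layerExponent s) / layerLevel s))) := by
        gcongr
        exact le_excess_add _ _ _ _
    _ ≤ ENNReal.ofReal (layerLevel 0) +
          (layeredExcess A B F x + (orbitMean B (weightedLayers F) x + 1)) := by
        unfold weightedLayers
        rw [ENNReal.tsum_add, ENNReal.tsum_add, orbitMean_tsum]
        simp only [orbitMean_const_mul]
        gcongr
        · exact le_rfl
        · exact tsum_exp_layerExponent_div_layerLevel_le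

lemma orbitMean_sup_ofReal_le_layered (A B T : AddSubgroup G) [Finite A] [Finite B] [Finite T]
    (F : G → ℝ) (x : G) :
    orbitMean (T ⊔ A) (fun y ↦ ENNReal.ofReal (F y)) x ≤ ENNReal.ofReal (layerLevel 0) +
      (orbitMean T (layeredExcess A B F) x + (orbitMean (T ⊔ B) (weightedLayers F) x + 1)) := by
  simp only [← orbitMean_orbitMean]
  refine (orbitMean_mono (orbitMean_ofReal_le_layered A B F) x).trans_eq ?_
  simp only [orbitMean_add, orbitMean_const]

lemma one_lt_orbitMean_or_of_lt_orbitMean_sup (A B T : AddSubgroup G) [Finite A] [Finite B]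
    [Finite T] {F : G → ℝ} {x : G} (hx : ENNReal.ofReal (layerLevel 0) + 3 <
      orbitMean (T ⊔ A) (fun y ↦ ENNReal.ofReal (F y)) x) :
    1 < orbitMean T (layeredExcess A B F) x ∨ 1 < orbitMean (T ⊔ B) (weightedLayers F) x := by
  by_contra! hle
  refine (hx.trans_le (orbitMean_sup_ofReal_le_layered A B T F x)).not_ge ?_
  calc _ ≤ ENNReal.ofReal (layerLevel 0) + (1 + (1 + 1)) := by
        gcongr
        exacts [hle.1, hle.2]
    _ = ENNReal.ofReal (layerLevel 0) + 3 := by norm_num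

lemma sup_Ico_sup_range (H : ℕ → AddSubgroup G) {j k : ℕ} (hjk : j < k) :
    (Finset.Ico (j + 1) k).sup H ⊔ (Finset.range j).sup H = (Finset.range k \ {j}).sup H := by
  rw [← Finset.sup_union]
  congr 1
  ext i
  simp only [Finset.mem_union, Finset.mem_Ico, Finset.mem_range, Finset.mem_sdiff,
    Finset.mem_singleton]
  omega

lemma sup_Ico_sup_range_succ (H : ℕ → AddSubgroup G) {j k : ℕ} (hjk : j < k) :
    (Finset.Ico (j + 1) k).sup H ⊔ (Finset.range (j + 1)).sup H = (Finset.range k).sup H := by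
  rw [← Finset.sup_union]
  congr 1
  ext i
  simp only [Finset.mem_union, Finset.mem_Ico, Finset.mem_range]
  omega

variable [MeasurableSpace G] [MeasurableAdd G] {F : G → ℝ}

lemma measurable_excess_orbitMean_layer (A B : AddSubgroup G) [Finite A] [Finite B]
    (hF : Measurable F) (s : ℕ) :
    Measurable fun x ↦ excess (layerLevel s) (layerExponent s)
      (orbitMean A (fun y ↦ layer s (F y)) x) (orbitMean B (fun y ↦ layer s (F y)) x) :=
  (measurable_excess _ _).comp ((measurable_orbitMean (measurable_layer hF s)).prodMk
    (measurable_orbitMean (measurable_layer hF s)))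

lemma measurable_layeredExcess (A B : AddSubgroup G) [Finite A] [Finite B] (hF : Measurable F) :
    Measurable (layeredExcess A B F) :=
  Measurable.tsum (measurable_excess_orbitMean_layer A B hF)

variable {μ : Measure G} [μ.IsAddRightInvariant]

lemma tsum_lintegral_excess_layer_le {K : ℕ → AddSubgroup G} [∀ j, Finite (K j)]
    (hK : Monotone K) (hK0 : K 0 = ⊥) (hF : Measurable F) {s : ℕ}
    (hfin : ∫⁻ x, layer s (F x) ∂μ ≠ ∞) :
    ∑' j, ∫⁻ x, excess (layerLevel s) (layerExponent s)
        (orbitMean (K j) (fun y ↦ layer s (F y)) x)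
        (orbitMean (K (j + 1)) (fun y ↦ layer s (F y)) x) ∂μ ≤
      ENNReal.ofReal (2 / layerExponent s) * ∫⁻ x, entropy (layerLevel s) (layer s (F x)) ∂μ := by
  have ht := four_le_layerExponent s
  have hdecrease := half_mul_tsum_lintegral_excess_le (layerLevel_pos s) ht hK
    (measurable_layer hF s) (fun x ↦ layer_le s (F x)) ENNReal.ofReal_ne_top hfin
  rw [hK0, orbitMean_bot] at hdecrease
  refine le_trans (le_of_eq ?_) (mul_le_mul_right hdecrease (ENNReal.ofReal (2 / layerExponent s)))
  rw [← mul_assoc, ← ENNReal.ofReal_mul (by positivity), div_mul_div_cancel₀ (by positivity),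
    div_self two_ne_zero, ENNReal.ofReal_one, one_mul]

lemma tsum_lintegral_layeredExcess_add_le {K : ℕ → AddSubgroup G} [∀ j, Finite (K j)]
    (hK : Monotone K) (hK0 : K 0 = ⊥) (hF : Measurable F)
    (hfin : ∫⁻ x, ENNReal.ofReal (PhiE (35 * F x)) ∂μ ≠ ∞) :
    ∑' j, ∫⁻ x, layeredExcess (K j) (K (j + 1)) F x ∂μ + ∫⁻ x, weightedLayers F x ∂μ ≤
      ∫⁻ x, ENNReal.ofReal (PhiE (35 * F x)) ∂μ := by
  have hlayer_fin (s : ℕ) : ∫⁻ x, layer s (F x) ∂μ ≠ ∞ := by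
    refine ne_top_of_le_ne_top hfin (lintegral_mono fun x ↦ ?_)
    have hexp : 1 ≤ ENNReal.ofReal (Real.exp (layerExponent s)) :=
      ENNReal.one_le_ofReal.2 (Real.one_le_exp (by linarith [four_le_layerExponent s]))
    calc layer s (F x) ≤ ENNReal.ofReal (Real.exp (layerExponent s)) * layer s (F x) :=
          le_mul_of_one_le_left' hexp
      _ ≤ _ := le_self_add
      _ ≤ _ := ENNReal.le_tsum s
      _ ≤ ENNReal.ofReal (PhiE (35 * F x)) := tsum_exp_mul_layer_add_entropy_le (F x)
  have hmeas (s : ℕ) : Measurable fun x ↦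
      ENNReal.ofReal (2 / layerExponent s) * entropy (layerLevel s) (layer s (F x)) :=
    ((measurable_entropy _).comp (measurable_layer hF s)).const_mul _
  have hexcess : ∑' j, ∫⁻ x, layeredExcess (K j) (K (j + 1)) F x ∂μ ≤
      ∫⁻ x, ∑' s, ENNReal.ofReal (2 / layerExponent s) *
        entropy (layerLevel s) (layer s (F x)) ∂μ := by
    rw [lintegral_tsum fun s ↦ (hmeas s).aemeasurable]
    simp only [layeredExcess, lintegral_const_mul' _ _ ENNReal.ofReal_ne_top,
      lintegral_tsum fun s ↦ (measurable_excess_orbitMean_layer _ _ hF s).aemeasurable]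
    rw [ENNReal.tsum_comm]
    exact ENNReal.tsum_le_tsum fun s ↦ tsum_lintegral_excess_layer_le hK hK0 hF (hlayer_fin s)
  calc _ ≤ (∫⁻ x, ∑' s, ENNReal.ofReal (2 / layerExponent s) *
          entropy (layerLevel s) (layer s (F x)) ∂μ) + ∫⁻ x, weightedLayers F x ∂μ := by gcongr
    _ = ∫⁻ x, ∑' s, (ENNReal.ofReal (Real.exp (layerExponent s)) * layer s (F x) +
          ENNReal.ofReal (2 / layerExponent s) * entropy (layerLevel s) (layer s (F x))) ∂μ := by
        rw [add_comm, ← lintegral_add_left (measurable_weightedLayers hF)]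
        simp only [weightedLayers, ENNReal.tsum_add]
    _ ≤ ∫⁻ x, ENNReal.ofReal (PhiE (35 * F x)) ∂μ :=
        lintegral_mono fun x ↦ tsum_exp_mul_layer_add_entropy_le (F x)

lemma measure_exists_lt_orbitMean_omit_le (H : ℕ → AddSubgroup G) [∀ i, Finite (H i)]
    (hF : Measurable F) :
    μ {x | ∃ k, ∃ j < k, ENNReal.ofReal (layerLevel 0) + 3 <
        orbitMean ((Finset.range k \ {j}).sup H) (fun y ↦ ENNReal.ofReal (F y)) x} ≤
      ∫⁻ x, ENNReal.ofReal (PhiE (35 * F x)) ∂μ := by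
  rcases eq_or_ne (∫⁻ x, ENNReal.ofReal (PhiE (35 * F x)) ∂μ) ∞ with htop | hfin
  · exact htop ▸ le_top
  set K : ℕ → AddSubgroup G := fun j ↦ (Finset.range j).sup H
  set T : ℕ → ℕ → AddSubgroup G := fun j k ↦ (Finset.Ico (j + 1) k).sup H
  have hK : Monotone K := fun _ _ hjk ↦ Finset.sup_mono (Finset.range_mono hjk)
  have hT (j) : Monotone (T j) := fun _ _ hkl ↦ Finset.sup_mono (Finset.Ico_subset_Ico_right hkl)
  have hcover : {x | ∃ k, ∃ j < k, ENNReal.ofReal (layerLevel 0) + 3 <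
        orbitMean ((Finset.range k \ {j}).sup H) (fun y ↦ ENNReal.ofReal (F y)) x} ⊆
      (⋃ j, {x | ∃ k, 1 < orbitMean (T j k) (layeredExcess (K j) (K (j + 1)) F) x}) ∪
        {x | ∃ k, 1 < orbitMean (K k) (weightedLayers F) x} := by
    rintro x ⟨k, j, hjk, hx⟩
    rw [← sup_Ico_sup_range H hjk] at hx
    have hor := one_lt_orbitMean_or_of_lt_orbitMean_sup (K j) (K (j + 1)) (T j k) hx
    rw [sup_Ico_sup_range_succ H hjk] at hor
    exact hor.imp (fun h ↦ mem_iUnion.2 ⟨j, k, h⟩) fun h ↦ ⟨k, h⟩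
  calc _ ≤ (∑' j, μ {x | ∃ k, 1 < orbitMean (T j k) (layeredExcess (K j) (K (j + 1)) F) x}) +
        μ {x | ∃ k, 1 < orbitMean (K k) (weightedLayers F) x} := by
        refine (measure_mono hcover).trans ((measure_union_le _ _).trans ?_)
        gcongr
        exact measure_iUnion_le _
    _ ≤ ∑' j, ∫⁻ x, layeredExcess (K j) (K (j + 1)) F x ∂μ + ∫⁻ x, weightedLayers F x ∂μ := by
        gcongr with j
        · simpa only [one_mul] using mul_measure_exists_lt_orbitMean_le_lintegral (μ := μ) (hT j)
            (measurable_layeredExcess (K j) (K (j + 1)) hF) 1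
        · simpa only [one_mul] using mul_measure_exists_lt_orbitMean_le_lintegral (μ := μ) hK
            (measurable_weightedLayers hF) 1
    _ ≤ ∫⁻ x, ENNReal.ofReal (PhiE (35 * F x)) ∂μ :=
        tsum_lintegral_layeredExcess_add_le hK rfl hF hfin

end WeakType

section Circle

lemma orbitMean_zmultiples {G : Type*} [AddCommGroup G] {a : G} (ha : IsOfFinAddOrder a)
    (f : G → ℝ≥0∞) (x : G) :
    orbitMean (AddSubgroup.zmultiples a) f x =
      (addOrderOf a : ℝ≥0∞)⁻¹ * ∑ k ∈ Finset.range (addOrderOf a), f (x + k • a) := by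
  rw [orbitMean, Nat.card_zmultiples, ← (finEquivZMultiples ha).tsum_eq, tsum_fintype,
    Finset.sum_range]
  rfl

lemma zmultiples_nsmul_sup_zmultiples_nsmul {G : Type*} [AddGroup G] {m n : ℕ}
    (hmn : m.Coprime n) (a : G) :
    AddSubgroup.zmultiples (m • a) ⊔ AddSubgroup.zmultiples (n • a) = AddSubgroup.zmultiples a := by
  have hmap (i : ℤ) : (AddSubgroup.zmultiples i).map (zmultiplesHom G a) =
      AddSubgroup.zmultiples (i • a) := AddMonoidHom.map_zmultiples _ _
  rw [← natCast_zsmul, ← natCast_zsmul, ← hmap, ← hmap, ← AddSubgroup.map_sup,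
    Int.zmultiples_sup, Int.gcd_natCast_natCast, hmn, hmap, Nat.cast_one, one_zsmul]

variable {p : ℝ}

lemma nsmul_period_div_mul {m : ℕ} (hm : m ≠ 0) (n : ℕ) :
    m • ((p / (m * n : ℕ) : ℝ) : AddCircle p) = ((p / n : ℝ) : AddCircle p) := by
  rw [← AddCircle.coe_nsmul, nsmul_eq_mul, Nat.cast_mul, ← mul_div_assoc,
    mul_div_mul_left _ _ (Nat.cast_ne_zero.2 hm)]

lemma zmultiples_period_div_sup {m n : ℕ} (hm : m ≠ 0) (hn : n ≠ 0) (hmn : m.Coprime n) :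
    AddSubgroup.zmultiples ((p / m : ℝ) : AddCircle p) ⊔
        AddSubgroup.zmultiples ((p / n : ℝ) : AddCircle p) =
      AddSubgroup.zmultiples ((p / (m * n : ℕ) : ℝ) : AddCircle p) := by
  rw [← nsmul_period_div_mul hm n, ← nsmul_period_div_mul hn m, mul_comm n m]
  exact zmultiples_nsmul_sup_zmultiples_nsmul hmn.symm _

lemma sup_zmultiples_period_div {ι : Type*} {q : ι → ℕ} (hq : ∀ i, q i ≠ 0)
    (hcoprime : Pairwise fun i j ↦ (q i).Coprime (q j)) (s : Finset ι) :
    s.sup (fun i ↦ AddSubgroup.zmultiples ((p / q i : ℝ) : AddCircle p)) =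
      AddSubgroup.zmultiples ((p / (∏ i ∈ s, q i : ℕ) : ℝ) : AddCircle p) := by
  classical
  induction s using Finset.induction_on with
  | empty => simp [AddCircle.coe_period]
  | insert i s hi ih =>
    have hi_coprime : (q i).Coprime (∏ j ∈ s, q j) :=
      Nat.Coprime.prod_right fun j hj ↦ hcoprime (ne_of_mem_of_not_mem hj hi).symm
    rw [Finset.sup_insert, ih, Finset.prod_insert hi,
      zmultiples_period_div_sup (hq i) (Finset.prod_ne_zero_iff.2 fun j _ ↦ hq j) hi_coprime]

lemma isOfFinAddOrder_period_div [Fact (0 < p)] {n : ℕ} (hn : n ≠ 0) :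
    IsOfFinAddOrder ((p / n : ℝ) : AddCircle p) :=
  addOrderOf_pos_iff.1 (by rwa [AddCircle.addOrderOf_period_div hn.pos, Nat.pos_iff_ne_zero])

lemma enorm_riemannSum_le {n : ℕ} (hn : n ≠ 0) (f : Circle1 → ℝ) (x : Circle1) :
    ‖RiemannSum n f x‖ₑ ≤
      orbitMean (AddSubgroup.zmultiples ((1 / n : ℝ) : Circle1)) (fun y ↦ ‖f y‖ₑ) x := by
  have horder : addOrderOf ((1 / n : ℝ) : Circle1) = n :=
    AddCircle.addOrderOf_period_div hn.pos
  have hnode (k : ℕ) : ((k / n : ℝ) : Circle1) = k • ((1 / n : ℝ) : Circle1) := by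
    rw [← AddCircle.coe_nsmul, nsmul_eq_mul, mul_one_div]
  rw [orbitMean_zmultiples (isOfFinAddOrder_period_div hn), horder, RiemannSum, enorm_mul,
    enorm_inv (Nat.cast_ne_zero.2 hn), Real.enorm_natCast]
  simp only [hnode]
  gcongr
  exact enorm_sum_le _ _

lemma prime_nthPrime (i : ℕ) : (nthPrime i).Prime := Nat.prime_nth_prime i

lemma pairwise_coprime_nthPrime : Pairwise fun i j ↦ (nthPrime i).Coprime (nthPrime j) :=
  fun i j hij ↦
    (Nat.coprime_primes (prime_nthPrime i) (prime_nthPrime j)).2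
      ((Nat.nth_injective Nat.infinite_setOfPred_prime).ne hij)

/-- The subgroup of order `p_{i+1}` of the circle. -/
noncomputable def primeTorsion (i : ℕ) : AddSubgroup Circle1 :=
  AddSubgroup.zmultiples ((1 / nthPrime i : ℝ) : Circle1)

instance finite_primeTorsion (i : ℕ) : Finite (primeTorsion i) :=
  finite_zmultiples.2 (isOfFinAddOrder_period_div (prime_nthPrime i).ne_zero)

lemma exists_lt_orbitMean_of_lt_abs_riemannSum {n : ℕ} (hn : n ∈ Eset) {f : Circle1 → ℝ}
    {x : Circle1} {lam : ℝ} (hlam : 0 ≤ lam) (hx : lam < |RiemannSum n f x|) :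
    ∃ k, ∃ j < k, ENNReal.ofReal lam <
      orbitMean ((Finset.range k \ {j}).sup primeTorsion) (fun y ↦ ‖f y‖ₑ) x := by
  obtain ⟨k, -, j, hj, rfl⟩ := hn
  have hne (i : ℕ) : nthPrime i ≠ 0 := (prime_nthPrime i).ne_zero
  refine ⟨k, j, hj, ?_⟩
  unfold primeTorsion
  rw [sup_zmultiples_period_div hne pairwise_coprime_nthPrime]
  refine lt_of_lt_of_le ?_ (enorm_riemannSum_le (Finset.prod_ne_zero_iff.2 fun i _ ↦ hne i) f x)
  rwa [Real.enorm_eq_ofReal_abs, ENNReal.ofReal_lt_ofReal_iff_of_nonneg hlam]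

end Circle

theorem riemann_maximal_weak_type_Eset_general :
    ∃ c : ℝ, 0 < c ∧
      ∀ {G : Type*} [AddCommGroup G] [MeasurableSpace G] [MeasurableAdd G] (μ : Measure G)
        [μ.IsAddRightInvariant] (H : ℕ → AddSubgroup G) [∀ i, Finite (H i)] (f : G → ℝ),
        Measurable f → ∀ lam : ℝ, 0 < lam →
          μ {x | ∃ k, ∃ j < k, ENNReal.ofReal lam <
              orbitMean ((Finset.range k \ {j}).sup H) (fun y ↦ ‖f y‖ₑ) x} ≤
            ∫⁻ t, ENNReal.ofReal (PhiE (c * |f t| / lam)) ∂μ := by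
  have ha := layerLevel_pos 0
  refine ⟨35 * (layerLevel 0 + 3), by positivity, ?_⟩
  intro G _ _ _ μ _ H _ f hf lam hlam
  set r : ℝ := (layerLevel 0 + 3) / lam
  have hr : 0 < r := by positivity
  have hscale : ENNReal.ofReal (layerLevel 0) + 3 = ENNReal.ofReal r * ENNReal.ofReal lam := by
    rw [← ENNReal.ofReal_mul hr.le, div_mul_cancel₀ _ hlam.ne',
      ENNReal.ofReal_add ha.le zero_le_three, ENNReal.ofReal_ofNat]
  have hmax := measure_exists_lt_orbitMean_omit_le (μ := μ) H (hf.abs.const_mul r)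
  simp only [ENNReal.ofReal_mul hr.le, orbitMean_const_mul, hscale,
    ENNReal.mul_lt_mul_iff_right (ENNReal.ofReal_pos.2 hr).ne' ENNReal.ofReal_ne_top,
    ← Real.enorm_eq_ofReal_abs] at hmax
  convert hmax using 5
  ring

/-- **Weak type maximal inequality for the set `E` (Theorem 2, inequality).** There is an
absolute constant `c > 0` such that for every `f ∈ L^Φ(𝕋)` and `λ > 0`,
`|{x : sup_{n∈E} |R_n f(x)| > λ}| ≤ ∫_𝕋 Φ(c|f|/λ)`. -/
theorem riemann_maximal_weak_type_Eset :
    ∃ c : ℝ, 0 < c ∧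
      ∀ f : Circle1 → ℝ, Measurable f →
        (∫⁻ x, ENNReal.ofReal (PhiE |f x|)) < ⊤ →
        ∀ lam : ℝ, 0 < lam →
          volume {x : Circle1 | ∃ n ∈ Eset, lam < |RiemannSum n f x|} ≤
            ∫⁻ t, ENNReal.ofReal (PhiE (c * |f t| / lam)) := by
  obtain ⟨c, hc, hweak⟩ := riemann_maximal_weak_type_Eset_general
  refine ⟨c, hc, fun f hf _ lam hlam ↦ ?_⟩
  refine le_trans (measure_mono ?_) (hweak volume primeTorsion f hf lam hlam)
  rintro x ⟨n, hn, hx⟩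
  exact exists_lt_orbitMean_of_lt_abs_riemannSum hn hlam.le hx
end

section
/- Let (n_k) be the increasing enumeration of the set E = {p_1⋯p_{j−1} p̌_j p_{j+1}⋯p_k : k ≥ 2, 1 ≤ j ≤ k}. If an increasing function φ : ℝ⁺ → ℝ⁺ satisfies lim_{x→∞} φ(x)·ln ln x/(x ln x) = 0, then there exists a function f ∈ L^φ(𝕋) such that the sequence (R_{n_k} f(x))_k diverges for every x ∈ 𝕋. -/
open MeasureTheory Filter Set

/-! Let `Q` be the product of a finite set `B` of primes and let `a / Q ≤ t < (a + 1) / Q`. If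
`a % p < S` for some `p ∈ B`, then some translate of `t` by a multiple of `p / Q` lies in
`[0, S / Q]`, so the `Q / p`-th Riemann sum at `t` of the function equal to `H` on `[0, S / Q]` is
at least `H * p / Q`. By the Chinese remainder theorem the remaining `t` have measure
`∏ p ∈ B, (1 - S / p)`. Dilating the circle by the product `w` of the missing small primes replaces
`Q / p` by `w * Q / p ∈ Eset` without changing any measure.

For `B` the primes in `(y / 4, y]`, `S ≈ K log y` and `H = 4 M Q / y`, these sums reach `M` outside
a set of measure at most about `exp (-K / 4)`, and `φ H * S / Q` tends to `0` because `log H ≍ y`: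
this is where the growth hypothesis on `φ` enters. The supremum of such functions, with summable
errors, has unbounded Riemann sums almost everywhere by Borel–Cantelli. The exceptional null set can
be enlarged to one invariant under rational translations, and there the function is replaced by
`‖x‖⁻²`, whose `n`-th Riemann sum is at least `n` everywhere. -/

open scoped Finset

section RiemannSums

lemma coe_intCast_eq_zero (z : ℤ) : ((z : ℝ) : Circle1) = 0 :=
  (AddCircle.coe_eq_zero_iff 1).2 ⟨z, by simp⟩

lemma riemannSum_le_riemannSum {n : ℕ} {f g : Circle1 → ℝ} {x : Circle1}
    (h : ∀ k : ℕ, f (x + ((k / n : ℝ) : Circle1)) ≤ g (x + ((k / n : ℝ) : Circle1))) :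
    RiemannSum n f x ≤ RiemannSum n g x := by
  unfold RiemannSum
  gcongr with k
  exact h k

lemma div_natCast_le_riemannSum {n : ℕ} (hn : 0 < n) {f : Circle1 → ℝ} {x : Circle1}
    (hf : ∀ k : ℕ, 0 ≤ f (x + ((k / n : ℝ) : Circle1))) (z : ℤ) :
    f (x + ((z / n : ℝ) : Circle1)) / n ≤ RiemannSum n f x := by
  have hn' : (n : ℤ) ≠ 0 := by exact_mod_cast hn.ne'
  obtain ⟨k, hk⟩ := Int.eq_ofNat_of_zero_le (Int.emod_nonneg z hn')
  have hkn : k < n := by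
    have := Int.emod_lt_of_pos z (Int.natCast_pos.2 hn)
    lia
  have hz : (z : ℝ) / n = k / n + (z / n : ℤ) := by
    have : (z : ℝ) = k + n * (z / n : ℤ) := by
      exact_mod_cast (hk ▸ (Int.emod_add_mul_ediv z n).symm)
    rw [this]
    field_simp
  have hcoe : ((z / n : ℝ) : Circle1) = ((k / n : ℝ) : Circle1) := by
    rw [hz, AddCircle.coe_add, coe_intCast_eq_zero, add_zero]
  rw [hcoe, div_eq_inv_mul, RiemannSum]
  gcongr
  exact Finset.single_le_sum (f := fun k : ℕ => f (x + ((k / n : ℝ) : Circle1)))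
    (fun k _ => hf k) (Finset.mem_range.2 hkn)

lemma sum_range_mul_of_periodic {M : Type*} [AddCommMonoid M] {G : ℕ → M} {d : ℕ}
    (hG : Function.Periodic G d) (w : ℕ) :
    ∑ k ∈ Finset.range (w * d), G k = w • ∑ k ∈ Finset.range d, G k := by
  induction w with
  | zero => simp
  | succ w ih =>
    have hshift : ∀ k, G (w * d + k) = G k := fun k => by
      rw [add_comm]
      exact hG.nat_mul w k
    rw [Nat.succ_mul, Finset.sum_range_add, ih, succ_nsmul]
    simp only [hshift]

lemma riemannSum_comp_nsmul {w : ℕ} (hw : 0 < w) (d : ℕ) (f : Circle1 → ℝ) (x : Circle1) :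
    RiemannSum (w * d) (fun y => f (w • y)) x = RiemannSum d f (w • x) := by
  have hw' : (w : ℝ) ≠ 0 := by exact_mod_cast hw.ne'
  have hpoint : ∀ k : ℕ, w • (x + ((k / (w * d : ℕ) : ℝ) : Circle1))
      = w • x + ((k / d : ℝ) : Circle1) := fun k => by
    rw [smul_add, ← AddCircle.coe_nsmul, nsmul_eq_mul, Nat.cast_mul, ← mul_div_assoc,
      mul_div_mul_left _ _ hw']
  have hper : Function.Periodic (fun k : ℕ => f (w • x + ((k / d : ℝ) : Circle1))) d := by
    intro k
    rcases eq_or_ne d 0 with rfl | hd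
    · rfl
    · have : ((k + d : ℕ) : ℝ) / d = k / d + (1 : ℤ) := by
        push_cast
        field_simp
      simp only [this, AddCircle.coe_add, coe_intCast_eq_zero, add_zero]
  simp only [RiemannSum, hpoint]
  rw [sum_range_mul_of_periodic hper, nsmul_eq_mul]
  push_cast
  field_simp

lemma natCast_le_riemannSum_inv_norm_sq {n : ℕ} (hn : 2 ≤ n) (x : Circle1) :
    (n : ℝ) ≤ RiemannSum n (fun y => (‖y‖ ^ 2)⁻¹) x := by
  have hn0 : (0 : ℝ) < n := by positivity
  have hn2 : (2 : ℝ) ≤ n := by exact_mod_cast hn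
  obtain ⟨t, rfl⟩ := QuotientAddGroup.mk_surjective x
  set a : ℤ := ⌈n * t⌉ - 1
  set s : ℝ := t + (-a : ℤ) / n with hs
  have hsn : s = (n * t - a) / n := by
    rw [hs]
    push_cast
    field_simp
    ring
  have ha : (a : ℝ) = ⌈n * t⌉ - 1 := by simp [a]
  have hs0 : 0 < s := by
    rw [hsn]
    exact div_pos (by linarith [Int.ceil_lt_add_one (n * t)]) hn0
  have hs1 : s ≤ 1 / n := by
    rw [hsn]
    gcongr
    linarith [Int.le_ceil (n * t)]
  have hnorm : ‖(s : Circle1)‖ = s := by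
    rw [(AddCircle.norm_coe_eq_abs_iff 1 one_ne_zero).2, abs_of_pos hs0]
    rw [abs_of_pos hs0, abs_one]
    exact hs1.trans (one_div_le_one_div_of_le two_pos hn2)
  calc (n : ℝ) = ((1 / (n : ℝ)) ^ 2)⁻¹ / n := by field_simp
    _ ≤ (‖(s : Circle1)‖ ^ 2)⁻¹ / n := by
      rw [hnorm]
      gcongr
    _ ≤ RiemannSum n (fun y => (‖y‖ ^ 2)⁻¹) t :=
      div_natCast_le_riemannSum (f := fun y => (‖y‖ ^ 2)⁻¹) (x := t) (by positivity)
        (fun k => by positivity) (-a)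

lemma not_tendsto_comp_nth_of_not_bddAbove {E : Set ℕ} {u : ℕ → ℝ} (h : ¬ BddAbove (u '' E)) :
    ¬ ∃ c : ℝ, Tendsto (fun k => u (Nat.nth (· ∈ E) k)) atTop (nhds c) := by
  rintro ⟨c, hc⟩
  refine h (hc.bddAbove_range.mono ?_)
  rintro _ ⟨n, hn, rfl⟩
  obtain ⟨k, rfl⟩ := Nat.subset_range_nth (p := (· ∈ E)) hn
  exact ⟨k, rfl⟩

end RiemannSums

section Arcs

/-- The closed arc of the circle `ℝ/ℤ` swept out by the real interval `[a, b]`. -/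
def arc (a b : ℝ) : Set Circle1 := (fun t : ℝ => (t : Circle1)) '' Icc a b

lemma measurableSet_arc (a b : ℝ) : MeasurableSet (arc a b) :=
  (isCompact_Icc.image (AddCircle.continuous_mk' 1)).measurableSet

lemma volume_arc_le (a b : ℝ) : volume (arc a b) ≤ ENNReal.ofReal (b - a) := by
  have hsub : arc a b ⊆ Metric.closedBall (((a + b) / 2 : ℝ) : Circle1) ((b - a) / 2) := by
    rintro _ ⟨t, ht, rfl⟩
    rw [mem_closedBall_iff_norm, ← AddCircle.coe_sub]
    refine (QuotientAddGroup.norm_mk_le_norm (S := AddSubgroup.zmultiples (1 : ℝ))).trans ?_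
    rw [Real.norm_eq_abs, abs_le]
    constructor <;> linarith [ht.1, ht.2]
  calc volume (arc a b) ≤ volume (Metric.closedBall (((a + b) / 2 : ℝ) : Circle1) ((b - a) / 2)) :=
        measure_mono hsub
    _ = ENNReal.ofReal (min 1 (2 * ((b - a) / 2))) := AddCircle.volume_closedBall 1 _
    _ ≤ ENNReal.ofReal (b - a) :=
        ENNReal.ofReal_le_ofReal ((min_le_right _ _).trans_eq (mul_div_cancel₀ _ two_ne_zero))

end Arcs

section Residues

variable {B : Finset ℕ} {S : ℕ}

lemma modEq_prod_of_forall_modEq (hB : (B : Set ℕ).Pairwise Nat.Coprime) {a b : ℕ}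
    (h : ∀ p ∈ B, a ≡ b [MOD p]) : a ≡ b [MOD ∏ p ∈ B, p] := by
  rw [Nat.modEq_iff_dvd, Nat.cast_prod]
  exact Finset.prod_dvd_of_coprime (fun p hp q hq hpq => (hB hp hq hpq).isCoprime)
    fun p hp => Nat.modEq_iff_dvd.1 (h p hp)

lemma card_filter_forall_mod_mem_le (hB : (B : Set ℕ).Pairwise Nat.Coprime) (T : ℕ → Finset ℕ) :
    #{a ∈ Finset.range (∏ p ∈ B, p) | ∀ p ∈ B, a % p ∈ T p} ≤ ∏ p ∈ B, #(T p) := by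
  rw [← Finset.card_pi]
  refine Finset.card_le_card_of_injOn (fun a p _ => a % p) ?_ ?_
  · intro a ha
    exact Finset.mem_pi.2 (Finset.mem_filter.1 ha).2
  · intro a ha b hb hab
    have hmod : a ≡ b [MOD ∏ p ∈ B, p] :=
      modEq_prod_of_forall_modEq hB fun p hp => congrFun (congrFun hab p) hp
    exact hmod.eq_of_lt_of_lt (Finset.mem_range.1 (Finset.mem_filter.1 ha).1)
      (Finset.mem_range.1 (Finset.mem_filter.1 hb).1)

/-- The residues modulo `∏ p ∈ B, p` that are at least `S` modulo every `p ∈ B`. -/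
def lateResidues (B : Finset ℕ) (S : ℕ) : Finset ℕ :=
  {a ∈ Finset.range (∏ p ∈ B, p) | ∀ p ∈ B, S ≤ a % p}

/-- The points `t` of the circle with `⌊Q * t⌋ ∈ lateResidues B S`, where `Q = ∏ p ∈ B, p`, up to
the endpoints of the arcs. Outside this set, some `Q / p`-th Riemann sum sees `arc 0 (S / Q)`. -/
def lateArcs (B : Finset ℕ) (S : ℕ) : Set Circle1 :=
  ⋃ a ∈ lateResidues B S, arc (a / (∏ p ∈ B, p : ℕ)) ((a + 1) / (∏ p ∈ B, p : ℕ))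

lemma measurableSet_lateArcs (B : Finset ℕ) (S : ℕ) : MeasurableSet (lateArcs B S) :=
  Finset.measurableSet_biUnion _ fun _ _ => measurableSet_arc _ _

lemma card_lateResidues_le (hB : (B : Set ℕ).Pairwise Nat.Coprime) (hB0 : ∀ p ∈ B, 0 < p) :
    #(lateResidues B S) ≤ ∏ p ∈ B, (p - S) := by
  calc #(lateResidues B S)
      ≤ #{a ∈ Finset.range (∏ p ∈ B, p) | ∀ p ∈ B, a % p ∈ Finset.Ico S p} := by
        refine Finset.card_le_card (Finset.monotone_filter_right _ fun a _ ha p hp => ?_)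
        exact Finset.mem_Ico.2 ⟨ha p hp, Nat.mod_lt _ (hB0 p hp)⟩
    _ ≤ ∏ p ∈ B, #(Finset.Ico S p) := card_filter_forall_mod_mem_le hB _
    _ = ∏ p ∈ B, (p - S) := by simp only [Nat.card_Ico]

lemma volume_lateArcs_le (hB : (B : Set ℕ).Pairwise Nat.Coprime)
    (hB0 : ∀ p ∈ B, 0 < p) (hS : ∀ p ∈ B, S ≤ p) :
    volume (lateArcs B S) ≤ ENNReal.ofReal (∏ p ∈ B, (1 - (S : ℝ) / p)) := by
  set Q : ℕ := ∏ p ∈ B, p with hQ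
  have hprod : ∏ p ∈ B, (1 - (S : ℝ) / p) = (∏ p ∈ B, (p - S) : ℕ) / Q := by
    rw [hQ, Nat.cast_prod, Nat.cast_prod, ← Finset.prod_div_distrib]
    refine Finset.prod_congr rfl fun p hp => ?_
    have : (p : ℝ) ≠ 0 := by exact_mod_cast (hB0 p hp).ne'
    rw [Nat.cast_sub (hS p hp), sub_div, div_self this]
  calc volume (lateArcs B S)
      ≤ ∑ a ∈ lateResidues B S, volume (arc (a / Q) ((a + 1) / Q)) :=
        measure_biUnion_finset_le _ _
    _ ≤ ∑ _a ∈ lateResidues B S, ENNReal.ofReal (1 / Q) := by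
        gcongr with a
        refine (volume_arc_le _ _).trans_eq ?_
        congr 1
        ring
    _ = ENNReal.ofReal (#(lateResidues B S) / Q) := by
        rw [Finset.sum_const, ← ENNReal.ofReal_nsmul, nsmul_eq_mul, mul_one_div]
    _ ≤ ENNReal.ofReal (∏ p ∈ B, (1 - (S : ℝ) / p)) := by
        rw [hprod]
        gcongr
        exact card_lateResidues_le hB hB0

lemma exists_add_div_mem_arc_of_notMem_lateArcs (hB0 : ∀ p ∈ B, 0 < p) {y : Circle1}
    (hy : y ∉ lateArcs B S) :
    ∃ p ∈ B, ∃ z : ℤ,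
      y + ((z / (∏ q ∈ B.erase p, q : ℕ) : ℝ) : Circle1) ∈ arc 0 (S / (∏ q ∈ B, q : ℕ)) := by
  set Q : ℕ := ∏ p ∈ B, p
  have hQ0 : (0 : ℝ) < Q := by exact_mod_cast Finset.prod_pos hB0
  obtain ⟨t, ht, rfl⟩ : ∃ t ∈ Ico (0 : ℝ) 1, (t : Circle1) = y := by
    have := (AddCircle.coe_image_Ico_eq (1 : ℝ) 0).ge (mem_univ y)
    rwa [zero_add] at this
  set a : ℕ := ⌊Q * t⌋₊
  have ha_le : (a : ℝ) ≤ Q * t := Nat.floor_le (mul_nonneg hQ0.le ht.1)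
  have ha_lt : Q * t < a + 1 := Nat.lt_floor_add_one _
  have haQ : a < Q := by
    rw [Nat.floor_lt (mul_nonneg hQ0.le ht.1)]
    nlinarith [ht.2]
  have ha_early : a ∉ lateResidues B S := fun ha => hy <| mem_iUnion₂.2
    ⟨a, ha, t, ⟨by rw [div_le_iff₀ hQ0]; linarith, by rw [le_div_iff₀ hQ0]; linarith⟩, rfl⟩
  obtain ⟨p, hp, hpS⟩ : ∃ p ∈ B, a % p < S := by
    by_contra! h
    exact ha_early (Finset.mem_filter.2 ⟨Finset.mem_range.2 haQ, h⟩)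
  have hp0 : (p : ℝ) ≠ 0 := by exact_mod_cast (hB0 p hp).ne'
  have hQp : (Q : ℝ) = p * (∏ q ∈ B.erase p, q : ℕ) := by
    exact_mod_cast (Finset.mul_prod_erase B (fun q => q) hp).symm
  set m : ℕ := a / p
  have hdiv : (a : ℝ) = p * m + (a % p : ℕ) := by
    exact_mod_cast (Nat.div_add_mod a p).symm
  have hmod : ((a % p : ℕ) : ℝ) + 1 ≤ S := by exact_mod_cast hpS
  have hpoint : t + (-m : ℤ) / (∏ q ∈ B.erase p, q : ℕ)
      = (Q * t - p * m) / Q := by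
    rw [sub_div, mul_div_cancel_left₀ _ hQ0.ne', hQp, mul_div_mul_left _ _ hp0]
    push_cast
    ring
  refine ⟨p, hp, -m, _, ?_, AddCircle.coe_add _ _ _⟩
  rw [hpoint]
  exact ⟨div_nonneg (by linarith [Nat.cast_nonneg (α := ℝ) (a % p)]) hQ0.le, by gcongr; linarith⟩

end Residues

section EsetArithmetic

lemma infinite_Eset : Eset.Infinite := by
  refine infinite_of_forall_exists_gt fun C => ?_
  refine ⟨∏ i ∈ Finset.range (C + 2) \ {0}, nthPrime i, ⟨C + 2, by lia, 0, by lia, rfl⟩, ?_⟩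
  calc C < nthPrime (C + 1) := by
        have := Nat.add_two_le_nth_prime (C + 1)
        unfold nthPrime
        lia
    _ ≤ ∏ i ∈ Finset.range (C + 2) \ {0}, nthPrime i :=
        Finset.single_le_prod' (fun i _ => (Nat.prime_nth_prime i).one_le) (by simp)

lemma exists_mul_prod_erase_mem_Eset {B : Finset ℕ} (hB : ∀ p ∈ B, p.Prime) :
    ∃ w : ℕ, 0 < w ∧ ∀ p ∈ B, w * ∏ q ∈ B.erase p, q ∈ Eset := by
  set k := B.sup id + 2
  set P : Finset ℕ := (Finset.range k).image nthPrime
  have hBP : B ⊆ P := fun p hp => by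
    have : p ≤ B.sup id := Finset.le_sup (f := id) hp
    have := Nat.count_le (p := Nat.Prime) (n := p)
    exact Finset.mem_image.2
      ⟨Nat.count Nat.Prime p, Finset.mem_range.2 (by lia), Nat.nth_count (hB p hp)⟩
  have hinj : Function.Injective nthPrime := Nat.nth_injective Nat.infinite_setOfPred_prime
  refine ⟨∏ q ∈ P \ B, q, Finset.prod_pos fun q hq => ?_, fun p hp => ?_⟩
  · obtain ⟨i, -, rfl⟩ := Finset.mem_image.1 (Finset.mem_sdiff.1 hq).1
    exact (Nat.prime_nth_prime i).pos
  · obtain ⟨j, hj, rfl⟩ := Finset.mem_image.1 (hBP hp)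
    refine ⟨k, by lia, j, Finset.mem_range.1 hj, ?_⟩
    have hunion : P \ B ∪ B.erase (nthPrime j) = (Finset.range k \ {j}).image nthPrime := by
      rw [Finset.image_sdiff _ _ hinj, Finset.image_singleton]
      grind
    rw [← Finset.prod_union (Finset.sdiff_disjoint.mono_right (Finset.erase_subset _ _)), hunion,
      Finset.prod_image hinj.injOn]

end EsetArithmetic

section InvariantNullSets

lemma exists_invariant_null_superset {ι G : Type*} [AddGroup ι] [Countable ι] [AddGroup G]
    [MeasurableSpace G] [MeasurableAdd G] {μ : Measure G} [μ.IsAddRightInvariant] (θ : ι →+ G)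
    {Z : Set G} (hZ : μ Z = 0) :
    ∃ N, Z ⊆ N ∧ MeasurableSet N ∧ μ N = 0 ∧ ∀ x i, x + θ i ∈ N ↔ x ∈ N := by
  obtain ⟨Z', hZZ', hZ'meas, hZ'⟩ := exists_measurable_superset_of_null hZ
  refine ⟨⋃ i, (· + θ i) ⁻¹' Z', fun x hx => mem_iUnion.2 ⟨0, ?_⟩,
    MeasurableSet.iUnion fun i => measurable_add_const _ hZ'meas,
    measure_iUnion_null fun i => by rwa [measure_preimage_add_right], fun x i => ?_⟩
  · simpa only [map_zero, add_zero, mem_preimage] using hZZ' hx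
  · simp only [mem_iUnion, mem_preimage, add_assoc, ← map_add]
    exact ((Equiv.addLeft i).surjective.exists (p := fun j => x + θ j ∈ Z')).symm

lemma exists_rat_invariant_null_superset {Z : Set Circle1} (hZ : volume Z = 0) :
    ∃ N, Z ⊆ N ∧ MeasurableSet N ∧ volume N = 0 ∧
      ∀ (x : Circle1) (k n : ℕ), x + ((k / n : ℝ) : Circle1) ∈ N ↔ x ∈ N := by
  obtain ⟨N, hZN, hNmeas, hN, hinv⟩ := exists_invariant_null_superset
    ((QuotientAddGroup.mk' (AddSubgroup.zmultiples (1 : ℝ))).comp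
      (Rat.castHom ℝ).toAddMonoidHom) hZ
  refine ⟨N, hZN, hNmeas, hN, fun x k n => ?_⟩
  simpa using hinv x (k / n)

end InvariantNullSets

section Superposition

variable {α : Type*} {A : ℕ → Set α} {H : ℕ → ℝ}

lemma finite_range_indicator_of_eventually_notMem {x : α} (hx : ∀ᶠ m in atTop, x ∉ A m) :
    (range fun m => (A m).indicator (fun _ => H m) x).Finite := by
  obtain ⟨m₀, hm₀⟩ := eventually_atTop.1 hx
  refine (((Set.finite_Iio m₀).image fun m => (A m).indicator (fun _ => H m) x).insert 0).subset ?_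
  rintro _ ⟨m, rfl⟩
  rcases lt_or_ge m m₀ with h | h
  · exact Or.inr ⟨m, h, rfl⟩
  · exact Or.inl (indicator_of_notMem (hm₀ m h) _)

lemma comp_iSup_indicator_le (ψ : ℝ → ENNReal) {x : α} (hx : ∀ᶠ m in atTop, x ∉ A m) :
    ψ (⨆ m, (A m).indicator (fun _ => H m) x)
      ≤ ψ 0 + ∑' m, (A m).indicator (fun _ => ψ (H m)) x := by
  obtain ⟨m, hm⟩ := (range_nonempty _).csSup_mem
    (finite_range_indicator_of_eventually_notMem (H := H) hx)
  rw [iSup, ← hm]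
  by_cases h : x ∈ A m
  · calc ψ ((A m).indicator (fun _ => H m) x) = (A m).indicator (fun _ => ψ (H m)) x := by
          rw [indicator_of_mem h, indicator_of_mem h]
      _ ≤ ∑' m, (A m).indicator (fun _ => ψ (H m)) x := ENNReal.le_tsum m
      _ ≤ _ := le_add_self
  · simp only [indicator_of_notMem h]
    exact le_self_add

lemma lintegral_comp_iSup_indicator_lt_top [MeasurableSpace α] {μ : Measure α} [IsFiniteMeasure μ]
    {ψ : ℝ → ENNReal} (hψ : ψ 0 ≠ ⊤) (hA : ∀ m, MeasurableSet (A m))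
    (hAμ : ∀ᵐ x ∂μ, ∀ᶠ m in atTop, x ∉ A m) (hcost : ∑' m, ψ (H m) * μ (A m) ≠ ⊤) :
    ∫⁻ x, ψ (⨆ m, (A m).indicator (fun _ => H m) x) ∂μ < ⊤ := by
  calc ∫⁻ x, ψ (⨆ m, (A m).indicator (fun _ => H m) x) ∂μ
      ≤ ∫⁻ x, ψ 0 + ∑' m, (A m).indicator (fun _ => ψ (H m)) x ∂μ :=
        lintegral_mono_ae (hAμ.mono fun x hx => comp_iSup_indicator_le ψ hx)
    _ = ψ 0 * μ univ + ∑' m, ψ (H m) * μ (A m) := by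
        rw [lintegral_add_left measurable_const, lintegral_const,
          lintegral_tsum fun m => (measurable_const.indicator (hA m)).aemeasurable]
        simp only [lintegral_indicator_const (hA _)]
    _ < ⊤ := ENNReal.add_lt_top.2
        ⟨ENNReal.mul_lt_top hψ.lt_top (measure_lt_top _ _), hcost.lt_top⟩

end Superposition

section Spikes

/-- The function `H` on the small set `A`, `0` elsewhere, is a spike for `E` and `φ`: outside the
small exceptional set `U`, one of its Riemann sums along `E` reaches `M`, while its `φ`-integral
over `A` is at most `η`. -/
structure IsSpike (E : Set ℕ) (φ : ℝ → ℝ) (M η : ℝ) (A U : Set Circle1) (H : ℝ) : Prop where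
  measurableSet : MeasurableSet A
  height_nonneg : 0 ≤ H
  volume_le : volume A ≤ ENNReal.ofReal η
  volume_exceptional_le : volume U ≤ ENNReal.ofReal η
  cost_le : ENNReal.ofReal (φ H) * volume A ≤ ENNReal.ofReal η
  exists_le_riemannSum : ∀ x ∉ U, ∃ n ∈ E, M ≤ RiemannSum n (A.indicator fun _ => H) x

lemma not_bddAbove_riemannSum_of_eventually_spike {E : Set ℕ} {A U : ℕ → Set Circle1} {H : ℕ → ℝ}
    {f : Circle1 → ℝ} {x : Circle1} (hxU : ∀ᶠ m in atTop, x ∉ U m)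
    (hspike : ∀ m : ℕ, ∀ x ∉ U m, ∃ n ∈ E, m ≤ RiemannSum n ((A m).indicator fun _ => H m) x)
    (hf : ∀ m k n : ℕ, (A m).indicator (fun _ => H m) (x + ((k / n : ℝ) : Circle1))
      ≤ f (x + ((k / n : ℝ) : Circle1))) :
    ¬ BddAbove ((RiemannSum · f x) '' E) := by
  rintro ⟨C, hC⟩
  obtain ⟨m, hm, hmC⟩ := (hxU.and (eventually_gt_atTop ⌈C⌉₊)).exists
  obtain ⟨n, hn, hle⟩ := hspike m x hm
  have hsum : (m : ℝ) ≤ C :=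
    (hle.trans (riemannSum_le_riemannSum fun k => hf m k n)).trans (hC ⟨n, hn, rfl⟩)
  exact (Nat.lt_of_ceil_lt hmC).not_ge hsum

lemma not_bddAbove_riemannSum_of_inv_norm_sq_le {E : Set ℕ} (hE : E.Infinite) {f : Circle1 → ℝ}
    {x : Circle1} (hf : ∀ k n : ℕ, (‖x + ((k / n : ℝ) : Circle1)‖ ^ 2)⁻¹
      ≤ f (x + ((k / n : ℝ) : Circle1))) :
    ¬ BddAbove ((RiemannSum · f x) '' E) := by
  rintro ⟨C, hC⟩
  obtain ⟨n, hn, hnC⟩ := hE.exists_gt (max 1 ⌈C⌉₊)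
  have hsum : (n : ℝ) ≤ C :=
    ((natCast_le_riemannSum_inv_norm_sq ((le_max_left _ _).trans_lt hnC) x).trans
      (riemannSum_le_riemannSum fun k => hf k n)).trans (hC ⟨n, hn, rfl⟩)
  exact (Nat.lt_of_ceil_lt ((le_max_right _ _).trans_lt hnC)).not_ge hsum

lemma exists_Lphi_function_not_bddAbove_riemannSum_of_isSpike {E : Set ℕ} (hE : E.Infinite)
    {φ : ℝ → ℝ} (hspike : ∀ M η : ℝ, 0 < M → 0 < η → ∃ A U H, IsSpike E φ M η A U H) :
    ∃ f : Circle1 → ℝ, Measurable f ∧ (∫⁻ x, ENNReal.ofReal (φ |f x|)) < ⊤ ∧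
      ∀ x, ¬ BddAbove ((RiemannSum · f x) '' E) := by
  classical
  choose A U H hAUH using fun m : ℕ => hspike (m + 1) ((1 / 2) ^ m) (by positivity) (by positivity)
  have hgeom : ∑' m : ℕ, ENNReal.ofReal ((1 / 2) ^ m) ≠ ⊤ :=
    summable_geometric_two.tsum_ofReal_ne_top
  have hsum {u : ℕ → ENNReal} (hu : ∀ m, u m ≤ ENNReal.ofReal ((1 / 2) ^ m)) : ∑' m, u m ≠ ⊤ :=
    ne_top_of_le_ne_top hgeom (ENNReal.tsum_le_tsum hu)
  have hA : ∀ᵐ x, ∀ᶠ m in atTop, x ∉ A m := ae_eventually_notMem (hsum fun m => (hAUH m).volume_le)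
  have hU : ∀ᵐ x, ∀ᶠ m in atTop, x ∉ U m :=
    ae_eventually_notMem (hsum fun m => (hAUH m).volume_exceptional_le)
  obtain ⟨N, hgood, hNmeas, hN, hinv⟩ := exists_rat_invariant_null_superset (hA.and hU)
  have hgood' : ∀ x ∉ N, (∀ᶠ m in atTop, x ∉ A m) ∧ ∀ᶠ m in atTop, x ∉ U m :=
    fun x hx => not_not.1 fun h => hx (hgood h)
  set F : Circle1 → ℝ := fun x => ⨆ m, (A m).indicator (fun _ => H m) x
  have hF : Measurable F := .iSup fun m => measurable_const.indicator (hAUH m).measurableSet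
  refine ⟨N.piecewise (fun x => (‖x‖ ^ 2)⁻¹) F, .piecewise hNmeas (by fun_prop) hF, ?_, fun x => ?_⟩
  · have hae : ∀ᵐ x, ENNReal.ofReal (φ |N.piecewise (fun x => (‖x‖ ^ 2)⁻¹) F x|)
        = ENNReal.ofReal (φ |F x|) :=
      (measure_eq_zero_iff_ae_notMem.1 hN).mono fun x hx => by rw [piecewise_eq_of_notMem _ _ _ hx]
    rw [lintegral_congr_ae hae]
    refine lintegral_comp_iSup_indicator_lt_top (ψ := fun t => ENNReal.ofReal (φ |t|))
      ENNReal.ofReal_ne_top (fun m => (hAUH m).measurableSet) hA (hsum fun m => ?_)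
    rw [abs_of_nonneg (hAUH m).height_nonneg]
    exact (hAUH m).cost_le
  · by_cases hx : x ∈ N
    · refine not_bddAbove_riemannSum_of_inv_norm_sq_le hE fun k n => ?_
      rw [piecewise_eq_of_mem _ _ _ ((hinv x k n).2 hx)]
    · refine not_bddAbove_riemannSum_of_eventually_spike (A := A) (H := H) (hgood' x hx).2
        (fun m y hy => ?_) fun m k n => ?_
      · obtain ⟨n, hn, hle⟩ := (hAUH m).exists_le_riemannSum y hy
        exact ⟨n, hn, (lt_add_one _).le.trans hle⟩
      · have hxk := mt (hinv x k n).1 hx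
        rw [piecewise_eq_of_notMem _ _ _ hxk]
        exact le_ciSup (finite_range_indicator_of_eventually_notMem (hgood' _ hxk).1).bddAbove m

end Spikes

section SpikesOfPrimes

lemma measurePreserving_nsmul {w : ℕ} (hw : 0 < w) :
    MeasurePreserving (fun x : Circle1 => w • x) volume volume := by
  simpa only [natCast_zsmul] using
    Measure.measurePreserving_zsmul (volume : Measure Circle1) (Int.natCast_ne_zero.2 hw.ne')

lemma exists_isSpike_Eset_of_primes {φ : ℝ → ℝ} {M η H : ℝ} {B : Finset ℕ} {S : ℕ}
    (hB : ∀ p ∈ B, p.Prime) (hS : ∀ p ∈ B, S ≤ p) (hH : 0 ≤ H)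
    (hM : ∀ p ∈ B, M ≤ H * p / (∏ q ∈ B, q : ℕ)) (hA : S / (∏ q ∈ B, q : ℕ) ≤ η)
    (hcost : φ H * (S / (∏ q ∈ B, q : ℕ)) ≤ η) (hU : ∏ p ∈ B, (1 - (S : ℝ) / p) ≤ η) :
    ∃ A U, IsSpike Eset φ M η A U H := by
  have hB0 : ∀ p ∈ B, 0 < p := fun p hp => (hB p hp).pos
  have hcoprime : (B : Set ℕ).Pairwise Nat.Coprime := fun p hp q hq hpq =>
    (Nat.coprime_primes (hB p hp) (hB q hq)).2 hpq
  obtain ⟨w, hw, hwE⟩ := exists_mul_prod_erase_mem_Eset hB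
  have hmp := measurePreserving_nsmul hw
  set Q : ℕ := ∏ q ∈ B, q
  have hvol : volume ((w • · : Circle1 → Circle1) ⁻¹' arc 0 (S / Q)) ≤ ENNReal.ofReal (S / Q) := by
    rw [hmp.measure_preimage (measurableSet_arc _ _).nullMeasurableSet]
    exact (volume_arc_le _ _).trans_eq (by rw [sub_zero])
  refine ⟨(w • ·) ⁻¹' arc 0 (S / Q), (w • ·) ⁻¹' lateArcs B S,
    hmp.measurable (measurableSet_arc _ _), hH, hvol.trans (ENNReal.ofReal_le_ofReal hA), ?_, ?_,
    fun x hx => ?_⟩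
  · rw [hmp.measure_preimage (measurableSet_lateArcs _ _).nullMeasurableSet]
    exact (volume_lateArcs_le hcoprime hB0 hS).trans (ENNReal.ofReal_le_ofReal hU)
  · calc ENNReal.ofReal (φ H) * volume _ ≤ ENNReal.ofReal (φ H) * ENNReal.ofReal (S / Q) := by
          gcongr
      _ = ENNReal.ofReal (φ H * (S / Q)) := (ENNReal.ofReal_mul' (by positivity)).symm
      _ ≤ ENNReal.ofReal η := ENNReal.ofReal_le_ofReal hcost
  · obtain ⟨p, hp, z, hz⟩ := exists_add_div_mem_arc_of_notMem_lateArcs hB0 hx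
    set d : ℕ := ∏ q ∈ B.erase p, q
    have hd : 0 < d := Finset.prod_pos fun q hq => hB0 q (Finset.mem_of_mem_erase hq)
    have hp0 : (p : ℝ) ≠ 0 := by exact_mod_cast (hB0 p hp).ne'
    have hQ : (Q : ℝ) = p * d := by exact_mod_cast (Finset.mul_prod_erase B (fun q => q) hp).symm
    refine ⟨w * d, hwE p hp, ?_⟩
    calc M ≤ H * p / Q := hM p hp
      _ = (arc 0 (S / Q)).indicator (fun _ => H) (w • x + ((z / d : ℝ) : Circle1)) / d := by
          rw [indicator_of_mem hz, hQ, mul_comm (p : ℝ), mul_div_mul_right _ _ hp0]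
      _ ≤ RiemannSum d ((arc 0 (S / Q)).indicator fun _ => H) (w • x) :=
          div_natCast_le_riemannSum hd (fun k => indicator_nonneg (fun _ _ => hH) _) z
      _ = RiemannSum (w * d) (((w • ·) ⁻¹' arc 0 (S / Q)).indicator fun _ => H) x :=
          (riemannSum_comp_nsmul hw d _ x).symm

end SpikesOfPrimes

section Asymptotics

lemma eventually_log_le_mul {c : ℝ} (hc : 0 < c) : ∀ᶠ y : ℝ in atTop, Real.log y ≤ c * y := by
  filter_upwards [Real.isLittleO_log_id_atTop.bound hc, eventually_ge_atTop 0] with y hy hy0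
  rw [id, Real.norm_of_nonneg hy0] at hy
  exact (Real.le_norm_self _).trans hy

lemma eventually_log_le_mul_sqrt {c : ℝ} (hc : 0 < c) :
    ∀ᶠ y : ℝ in atTop, Real.log y ≤ c * √y := by
  filter_upwards [(isLittleO_log_rpow_atTop (r := 1 / 2) one_half_pos).bound hc] with y hy
  rw [← Real.sqrt_eq_rpow, Real.norm_of_nonneg (Real.sqrt_nonneg _)] at hy
  exact (Real.le_norm_self _).trans hy

lemma prod_one_sub_div_le_exp {B : Finset ℕ} {s y : ℝ} (hs : 0 ≤ s)
    (hB : ∀ p ∈ B, 0 < p ∧ s ≤ p ∧ p ≤ y) :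
    ∏ p ∈ B, (1 - s / p) ≤ Real.exp (-(#B * (s / y))) := by
  calc ∏ p ∈ B, (1 - s / p) ≤ ∏ _p ∈ B, Real.exp (-(s / y)) := by
        refine Finset.prod_le_prod (fun p hp => ?_) fun p hp => ?_
        · exact sub_nonneg.2 (div_le_one_of_le₀ (hB p hp).2.1 p.cast_nonneg)
        · have hp0 : (0 : ℝ) < p := by exact_mod_cast (hB p hp).1
          refine le_trans ?_ (Real.one_sub_le_exp_neg _)
          gcongr
          exact (hB p hp).2.2
    _ = Real.exp (-(#B * (s / y))) := by
        rw [Finset.prod_const, ← Real.exp_nat_mul, mul_neg]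

end Asymptotics

section PrimeBlocks

/-- The primes in `(y / 4, y]`, whose product has logarithm of order `y`. -/
noncomputable def primeBlock (y : ℝ) : Finset ℕ :=
  {p ∈ Finset.Ioc ⌊y / 4⌋₊ ⌊y⌋₊ | p.Prime}

/-- The product of the primes in `(y / 4, y]`. -/
noncomputable def blockProd (y : ℝ) : ℕ := ∏ p ∈ primeBlock y, p

variable {y : ℝ}

lemma mem_primeBlock (hy : 0 ≤ y) {p : ℕ} :
    p ∈ primeBlock y ↔ p.Prime ∧ y / 4 < p ∧ p ≤ y := by
  rw [primeBlock, Finset.mem_filter, Finset.mem_Ioc, Nat.floor_lt (by positivity),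
    Nat.le_floor_iff hy, and_comm]

lemma prime_of_mem_primeBlock {p : ℕ} (hp : p ∈ primeBlock y) : p.Prime :=
  (Finset.mem_filter.1 hp).2

lemma blockProd_pos (y : ℝ) : (0 : ℝ) < blockProd y := by
  exact_mod_cast Finset.prod_pos fun p hp => (prime_of_mem_primeBlock hp).pos

lemma log_blockProd (y : ℝ) : Real.log (blockProd y) = ∑ p ∈ primeBlock y, Real.log p := by
  rw [blockProd, Nat.cast_prod]
  exact Real.log_prod fun p hp => by exact_mod_cast (prime_of_mem_primeBlock hp).ne_zero

lemma log_blockProd_eq_theta_sub_theta (hy : 0 ≤ y) :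
    Real.log (blockProd y) = Chebyshev.theta y - Chebyshev.theta (y / 4) := by
  have hle : ⌊y / 4⌋₊ ≤ ⌊y⌋₊ := Nat.floor_mono (by linarith)
  have hdisj : Disjoint (Finset.Ioc 0 ⌊y / 4⌋₊) (Finset.Ioc ⌊y / 4⌋₊ ⌊y⌋₊) :=
    Finset.Ioc_disjoint_Ioc_of_le le_rfl
  rw [log_blockProd, eq_sub_iff_add_eq', Chebyshev.theta, Chebyshev.theta, primeBlock,
    ← Finset.sum_union (Finset.disjoint_filter_filter hdisj), ← Finset.filter_union,
    Finset.Ioc_union_Ioc_eq_Ioc (Nat.zero_le _) hle]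

lemma log_four_eq : Real.log 4 = 2 * Real.log 2 := by
  rw [show (4 : ℝ) = 2 ^ 2 by norm_num, Real.log_pow, Nat.cast_ofNat]

lemma log_blockProd_le (hy : 0 ≤ y) : Real.log (blockProd y) ≤ 2 * y := by
  calc Real.log (blockProd y) = Chebyshev.theta y - Chebyshev.theta (y / 4) :=
        log_blockProd_eq_theta_sub_theta hy
    _ ≤ Real.log 4 * y :=
        (sub_le_self _ (Chebyshev.theta_nonneg _)).trans (Chebyshev.theta_le_log4_mul_x hy)
    _ ≤ 2 * y := by
        gcongr
        linarith [log_four_eq, Real.log_two_lt_d9]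

lemma eventually_le_log_blockProd : ∀ᶠ y : ℝ in atTop, y / 4 ≤ Real.log (blockProd y) := by
  filter_upwards [eventually_ge_atTop 100, eventually_log_le_mul_sqrt (c := 1 / 100) (by norm_num)]
    with y hy hlog
  have hy0 : 0 ≤ y := by linarith
  have hsq : √y ^ 2 = y := Real.sq_sqrt hy0
  have hlog_add_two : Real.log (y + 2) ≤ 2 * Real.log y := by
    rw [← Nat.cast_ofNat (n := 2) (R := ℝ), ← Real.log_pow]
    exact Real.log_le_log (by positivity) (by norm_num; nlinarith)
  have herr : 2 * √y * Real.log y ≤ y / 50 := by nlinarith [Real.sqrt_nonneg y]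
  have hsqrt : 10 ≤ √y := Real.le_sqrt_of_sq_le (by linarith)
  have hlower := Chebyshev.theta_ge' (x := y) (by linarith)
  have hupper := Chebyshev.theta_le_log4_mul_x (x := y / 4) (by positivity)
  rw [log_four_eq] at hupper
  rw [log_blockProd_eq_theta_sub_theta hy0]
  nlinarith [Real.log_two_gt_d9, Real.log_two_lt_d9]

lemma log_blockProd_le_card_mul_log (hy : 0 ≤ y) :
    Real.log (blockProd y) ≤ #(primeBlock y) * Real.log y := by
  rw [log_blockProd, ← nsmul_eq_mul]
  refine Finset.sum_le_card_nsmul _ _ _ fun p hp => ?_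
  obtain ⟨hprime, -, hpy⟩ := (mem_primeBlock hy).1 hp
  exact Real.log_le_log (by exact_mod_cast hprime.pos) hpy

end PrimeBlocks

section Parameters

/-- The number `S` of residues allowed for each prime of `primeBlock y`. As the block has about
`y / log y` primes, `S ≈ K log y` makes `∏ (1 - S / p)` at most about `exp (-K / 4)`. -/
noncomputable def residueCount (K y : ℝ) : ℕ := ⌈K * Real.log y⌉₊

/-- The height `H` for which `H * p / blockProd y ≥ M` as soon as `p ≥ y / 4`. -/
noncomputable def spikeHeight (M y : ℝ) : ℝ := 4 * M * blockProd y / y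

variable {K M y : ℝ}

lemma eventually_residueCount_le_mul_log (hK : 0 ≤ K) :
    ∀ᶠ y : ℝ in atTop, residueCount K y ≤ (K + 1) * Real.log y := by
  filter_upwards [Real.tendsto_log_atTop.eventually_ge_atTop 1] with y hy
  unfold residueCount
  linarith [Nat.ceil_lt_add_one (show 0 ≤ K * Real.log y by positivity)]

lemma eventually_residueCount_le_mul (hK : 0 ≤ K) {c : ℝ} (hc : 0 < c) :
    ∀ᶠ y : ℝ in atTop, residueCount K y ≤ c * y := by
  filter_upwards [eventually_residueCount_le_mul_log hK,
    eventually_log_le_mul (c := c / (K + 1)) (by positivity)] with y hS hlog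
  calc (residueCount K y : ℝ) ≤ (K + 1) * Real.log y := hS
    _ ≤ (K + 1) * (c / (K + 1) * y) := by gcongr
    _ = c * y := by field_simp

lemma eventually_residueCount_div_blockProd_le (hK : 0 ≤ K) {η : ℝ} (hη : 0 < η) :
    ∀ᶠ y : ℝ in atTop, (residueCount K y : ℝ) / blockProd y ≤ η := by
  filter_upwards [eventually_residueCount_le_mul hK (c := η / 4) (by positivity),
    eventually_le_log_blockProd] with y hS hQ
  rw [div_le_iff₀ (blockProd_pos y)]
  calc (residueCount K y : ℝ) ≤ η * (y / 4) := by linarith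
    _ ≤ η * blockProd y := by
        gcongr
        exact hQ.trans (Real.log_le_self (blockProd_pos y).le)

lemma eventually_prod_one_sub_residueCount_div_le (hK : 0 ≤ K) :
    ∀ᶠ y : ℝ in atTop,
      ∏ p ∈ primeBlock y, (1 - (residueCount K y : ℝ) / p) ≤ Real.exp (-(K / 4)) := by
  filter_upwards [eventually_gt_atTop 0, eventually_le_log_blockProd,
    eventually_residueCount_le_mul hK (c := 1 / 4) (by norm_num)] with y hy hQ hS
  refine (prod_one_sub_div_le_exp (y := y) (Nat.cast_nonneg _) fun p hp => ?_).trans ?_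
  · obtain ⟨hprime, hyp, hpy⟩ := (mem_primeBlock hy.le).1 hp
    exact ⟨hprime.pos, by linarith, hpy⟩
  · have hcard : K * (y / 4) ≤ #(primeBlock y) * residueCount K y := by
      calc K * (y / 4) ≤ K * (#(primeBlock y) * Real.log y) := by
            gcongr
            exact hQ.trans (log_blockProd_le_card_mul_log hy.le)
        _ = #(primeBlock y) * (K * Real.log y) := by ring
        _ ≤ #(primeBlock y) * residueCount K y := by
            gcongr
            exact Nat.le_ceil _
    gcongr
    rw [← mul_div_assoc, le_div_iff₀ hy]
    linarith

lemma spikeHeight_pos (hM : 0 < M) (hy : 0 < y) : 0 < spikeHeight M y := by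
  have := blockProd_pos y
  unfold spikeHeight
  positivity

lemma le_spikeHeight_mul_div (hM : 0 ≤ M) (hy : 0 < y) {p : ℕ} (hp : p ∈ primeBlock y) :
    M ≤ spikeHeight M y * p / blockProd y := by
  have hQ := blockProd_pos y
  have hyp := ((mem_primeBlock hy.le).1 hp).2.1
  calc M ≤ M * (p / (y / 4)) := le_mul_of_one_le_right hM ((one_le_div (by positivity)).2 hyp.le)
    _ = spikeHeight M y * p / blockProd y := by
        rw [spikeHeight]
        field_simp

lemma log_spikeHeight (hM : 0 < M) (hy : 0 < y) :
    Real.log (spikeHeight M y) = Real.log (4 * M) + Real.log (blockProd y) - Real.log y := by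
  have hQ := blockProd_pos y
  rw [spikeHeight, Real.log_div (by positivity) hy.ne', Real.log_mul (by positivity) hQ.ne']

lemma eventually_le_log_spikeHeight (hM : 0 < M) :
    ∀ᶠ y : ℝ in atTop, y / 8 ≤ Real.log (spikeHeight M y) := by
  filter_upwards [eventually_gt_atTop 0, eventually_ge_atTop (-Real.log (4 * M) * 16),
    eventually_log_le_mul (c := 1 / 16) (by norm_num), eventually_le_log_blockProd]
    with y hy hyM hlog hQ
  rw [log_spikeHeight hM hy]
  linarith

lemma eventually_log_spikeHeight_le (hM : 0 < M) :
    ∀ᶠ y : ℝ in atTop, Real.log (spikeHeight M y) ≤ 3 * y := by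
  filter_upwards [eventually_ge_atTop 1, eventually_ge_atTop (Real.log (4 * M))] with y hy hyM
  rw [log_spikeHeight hM (by linarith)]
  linarith [log_blockProd_le (y := y) (by linarith), Real.log_nonneg hy]

lemma eventually_log_le_two_mul_log_log_spikeHeight (hM : 0 < M) :
    ∀ᶠ y : ℝ in atTop, Real.log y ≤ 2 * Real.log (Real.log (spikeHeight M y)) := by
  filter_upwards [eventually_ge_atTop 64, eventually_le_log_spikeHeight hM] with y hy hlog
  calc Real.log y ≤ Real.log ((y / 8) ^ 2) := Real.log_le_log (by linarith) (by nlinarith)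
    _ = 2 * Real.log (y / 8) := by rw [Real.log_pow, Nat.cast_ofNat]
    _ ≤ 2 * Real.log (Real.log (spikeHeight M y)) := by gcongr

lemma tendsto_spikeHeight_atTop (hM : 0 < M) : Tendsto (spikeHeight M) atTop atTop := by
  refine tendsto_atTop_mono' _ ?_ (tendsto_id.atTop_div_const (by norm_num : (0 : ℝ) < 8))
  filter_upwards [eventually_gt_atTop 0, eventually_le_log_spikeHeight hM] with y hy hlog
  exact hlog.trans (Real.log_le_self (spikeHeight_pos hM hy).le)

lemma eventually_spikeHeight_cost_factor_le (hM : 0 < M) (hK : 0 ≤ K) :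
    ∀ᶠ y : ℝ in atTop,
      spikeHeight M y * Real.log (spikeHeight M y) / Real.log (Real.log (spikeHeight M y))
        * (residueCount K y / blockProd y) ≤ 24 * M * (K + 1) := by
  filter_upwards [eventually_gt_atTop 1, eventually_log_spikeHeight_le hM,
    eventually_log_le_two_mul_log_log_spikeHeight hM, eventually_residueCount_le_mul_log hK]
    with y hy hlog hloglog hS
  have hy0 : 0 < y := by linarith
  have hQ := blockProd_pos y
  have hH := spikeHeight_pos hM hy0
  have hlogy := Real.log_pos hy
  calc _ ≤ spikeHeight M y * (3 * y) / (Real.log y / 2)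
        * ((K + 1) * Real.log y / blockProd y) := by
        gcongr
        linarith
    _ = 24 * M * (K + 1) := by
        rw [spikeHeight]
        field_simp
        ring

lemma tendsto_comp_spikeHeight_mul_zero {φ : ℝ → ℝ}
    (hφ : Tendsto (fun x : ℝ => φ x * Real.log (Real.log x) / (x * Real.log x)) atTop (nhds 0))
    (hM : 0 < M) (hK : 0 ≤ K) :
    Tendsto (fun y => φ (spikeHeight M y) * (residueCount K y / blockProd y)) atTop (nhds 0) := by
  have hlogH := Real.tendsto_log_atTop.comp (tendsto_spikeHeight_atTop hM)
  have hloglogH := Real.tendsto_log_atTop.comp hlogH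
  refine ((hφ.comp (tendsto_spikeHeight_atTop hM)).zero_mul_isBoundedUnder_le
    (g := fun y => spikeHeight M y * Real.log (spikeHeight M y)
      / Real.log (Real.log (spikeHeight M y)) * (residueCount K y / blockProd y))
    (isBoundedUnder_of_eventually_le (a := 24 * M * (K + 1)) ?_)).congr' ?_
  · filter_upwards [eventually_gt_atTop 0, hlogH.eventually_gt_atTop 0,
      hloglogH.eventually_gt_atTop 0, eventually_spikeHeight_cost_factor_le hM hK]
      with y hy hlog hloglog hle
    have hH := spikeHeight_pos hM hy
    simp only [Function.comp_apply] at hlog hloglog ⊢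
    rwa [Real.norm_of_nonneg (by positivity)]
  · filter_upwards [eventually_gt_atTop 0, hlogH.eventually_gt_atTop 0,
      hloglogH.eventually_gt_atTop 0] with y hy hlog hloglog
    have hH := spikeHeight_pos hM hy
    simp only [Function.comp_apply] at hlog hloglog ⊢
    field_simp

end Parameters

lemma exists_isSpike_Eset {φ : ℝ → ℝ}
    (hφ : Tendsto (fun x : ℝ => φ x * Real.log (Real.log x) / (x * Real.log x)) atTop (nhds 0))
    {M η : ℝ} (hM : 0 < M) (hη : 0 < η) : ∃ A U H, IsSpike Eset φ M η A U H := by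
  obtain ⟨K, hK, hKη⟩ : ∃ K : ℝ, 0 ≤ K ∧ Real.exp (-(K / 4)) ≤ η := by
    refine ⟨max 0 (-(4 * Real.log η)), le_max_left _ _, (Real.le_log_iff_exp_le hη).1 ?_⟩
    linarith [le_max_right 0 (-(4 * Real.log η))]
  obtain ⟨y, hy, hS, hA, hcost, hU⟩ := ((eventually_gt_atTop 0).and <|
    (eventually_residueCount_le_mul hK (c := 1 / 4) (by norm_num)).and <|
    (eventually_residueCount_div_blockProd_le hK hη).and <|
    ((tendsto_comp_spikeHeight_mul_zero hφ hM hK).eventually_le_const hη).and <|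
    eventually_prod_one_sub_residueCount_div_le hK).exists
  obtain ⟨A, U, hAU⟩ := exists_isSpike_Eset_of_primes (B := primeBlock y)
    (fun p hp => prime_of_mem_primeBlock hp)
    (fun p hp => by
      have := ((mem_primeBlock hy.le).1 hp).2.1
      exact_mod_cast (by linarith : (residueCount K y : ℝ) ≤ p))
    (spikeHeight_pos hM hy).le (fun p hp => le_spikeHeight_mul_div hM.le hy hp) hA hcost
    (hU.trans hKη)
  exact ⟨A, U, _, hAU⟩

theorem exists_Lphi_function_riemannSums_diverge_everywhere_Eset_general {φ : ℝ → ℝ}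
    (hφ : Tendsto (fun x : ℝ => φ x * Real.log (Real.log x) / (x * Real.log x)) atTop (nhds 0)) :
    ∃ f : Circle1 → ℝ, Measurable f ∧ (∫⁻ x, ENNReal.ofReal (φ |f x|)) < ⊤ ∧
      ∀ x : Circle1, ¬ BddAbove ((RiemannSum · f x) '' Eset) :=
  exists_Lphi_function_not_bddAbove_riemannSum_of_isSpike infinite_Eset
    fun _ _ hM hη => exists_isSpike_Eset hφ hM hη

/-- **Sharpness for the set `E` (Theorem 3).** Let `(n_k)` be the increasing enumeration
of `E`. If an increasing `φ : ℝ⁺ → ℝ⁺` satisfies `φ(x)·ln ln x/(x ln x) → 0`, then there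
is `f ∈ L^φ(𝕋)` whose Riemann sums `R_{n_k} f(x)` diverge at every `x`. -/
theorem exists_Lphi_function_riemannSums_diverge_everywhere_Eset
    (φ : ℝ → ℝ) (hφmono : MonotoneOn φ (Set.Ici 0)) (hφpos : ∀ x ≥ (0:ℝ), 0 ≤ φ x)
    (hφ : Tendsto (fun x : ℝ => φ x * Real.log (Real.log x) / (x * Real.log x))
      atTop (nhds 0)) :
    ∃ f : Circle1 → ℝ, Measurable f ∧
      (∫⁻ x, ENNReal.ofReal (φ |f x|)) < ⊤ ∧
      ∀ x : Circle1, ¬ ∃ c : ℝ,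
        Tendsto (fun k => RiemannSum (Nat.nth (· ∈ Eset) k) f x) atTop (nhds c) := by
  obtain ⟨f, hf, hfφ, hunbdd⟩ := exists_Lphi_function_riemannSums_diverge_everywhere_Eset_general hφ
  exact ⟨f, hf, hfφ, fun x => not_tendsto_comp_nth_of_not_bddAbove (hunbdd x)⟩
end

section
/- Fix d ≥ 1. Any collection Θ = {A_α} of rectangles from 𝓕_d contains a finite subcollection {Ã_1, …, Ã_m} such that λ(⋃_α A_α) ≤ 5·λ(⋃_{j=1}^m Ã_j) and ∫_{𝕋^∞} Ψ( (1/3) ∑_{j=1}^m 𝟙_{Ã_j}(x) ) dλ(x) ≤ C for an absolute constant C > 0. -/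
open MeasureTheory Set

/-- The infinite torus `𝕋^∞ = ∏_{k=1}^∞ 𝕋`. -/
abbrev Tinf := ℕ → Circle1

/-- The arc `[a, b) ⊆ 𝕋`. -/
def circleIco (a b : ℝ) : Set Circle1 := (fun r : ℝ => (r : Circle1)) '' Set.Ico a b

/-- `μ` is the product Lebesgue probability measure on `𝕋^∞`. -/
def IsProductLebesgue (μ : Measure Tinf) : Prop :=
  IsProbabilityMeasure μ ∧
    ∀ (s : Finset ℕ) (A : ℕ → Set Circle1), (∀ i, MeasurableSet (A i)) →
      μ {x | ∀ i ∈ s, x i ∈ A i} = ∏ i ∈ s, volume (A i)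

/-- The family `𝓕_d` of rectangles `B_m(j_1,…,j_d)` with `m ∈ E_d`, i.e. rectangles whose
constrained coordinates (with side `1/p_k`) are indexed by `{ν} ∪ {μ, μ+1, …, d}` for some
`1 ≤ ν < μ ≤ d+1` (here written 0-indexed: `{ν} ∪ [μ, d)` with `ν < μ ≤ d`). -/
noncomputable def Fd (d : ℕ) : Set (Set Tinf) :=
  {B | ∃ ν mu : ℕ, ν < mu ∧ mu ≤ d ∧ ∃ j : ℕ → ℕ, (∀ k, j k < nthPrime k) ∧
    B = {x | ∀ k : ℕ, (k = ν ∨ (mu ≤ k ∧ k < d)) →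
      x k ∈ circleIco ((j k : ℝ) / (nthPrime k : ℝ)) (((j k : ℝ) + 1) / (nthPrime k : ℝ))}}

/-- `α(x) = x^{x-1}` for `x > 1` and `α(x) = x` for `x ≤ 1`. -/
noncomputable def alphaFn (x : ℝ) : ℝ := if 1 < x then x ^ (x - 1) else x

/-- `Ψ(x) = ∫_0^{|x|} α(t) dt`. -/
noncomputable def PsiFn (x : ℝ) : ℝ := ∫ t in (0:ℝ)..|x|, alphaFn t

/-!
Write `N` for the number of chosen rectangles containing a point. Since `Ψ(k/3) ≤ 4 (k-1)!`, it is
enough to control the expectation of `(N-1)!`. In terms of the first digits of the coordinates,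
which are independent and uniform, a rectangle fixes the digits `ν` and `m, …, d-1` for some
`ν < m`.

Freeze the digits above level `n`. Over such a fibre every rectangle either is a slab, fixing a
single digit `ν < n`, or fixes the digit `n-1` and hence lives in one fibre of level `n-1`. Choose
slabs one by one. As soon as their total probability exceeds `1/4`, by independence their union has
probability at least `(1/4)/(1+1/4) = 1/5` in the fibre, so nothing more is needed there; the slabs
before the last one have total probability at most `1/4`, and the last one raises `N` by at most
one, which is why the bound is for `(N-1)!`. If the slabs run out first, descend to the fibres of
level `n-1`, remembering the chosen slabs. Slabs of total probability `c < 1` satisfy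
`E[N!] ≤ 1/(1-c)`, which is at most `4/3` when `c ≤ 1/4`.
-/

open Finset Function
open scoped BigOperators Nat

section Averaging

variable {α : ℕ → Type*} {n : ℕ} {f g : (∀ k, α k) → ℝ} {A B : Set (∀ k, α k)}
  {ω η : ∀ k, α k}

/-- The configurations that agree with `ω` in every coordinate `k ≥ n`. -/
def fibre (n : ℕ) (ω : ∀ k, α k) : Set (∀ k, α k) := {η | ∀ k, n ≤ k → η k = ω k}

lemma mem_fibre_update {a : α n} :
    η ∈ fibre n (update ω n a) ↔ η n = a ∧ η ∈ fibre (n + 1) ω := by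
  constructor
  · intro h
    refine ⟨by simpa using h n le_rfl, fun k hk => ?_⟩
    rw [h k (by lia), update_of_ne (by lia)]
  · rintro ⟨ha, h⟩ k hk
    obtain rfl | hk := hk.eq_or_lt
    · simpa using ha
    · rw [h k hk, update_of_ne hk.ne']

/-- The configuration whose first `n` coordinates are those of `b` and whose other coordinates are
those of `ω`. -/
def splice (b : ∀ k : Fin n, α k) (ω : ∀ k, α k) : ∀ k, α k :=
  fun k => if h : k < n then b ⟨k, h⟩ else ω k

lemma splice_mem_fibre (b : ∀ k : Fin n, α k) (ω : ∀ k, α k) : splice b ω ∈ fibre n ω :=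
  fun _ hk => dif_neg hk.not_gt

lemma splice_snoc (b : ∀ k : Fin n, α k) (a : α n) (ω : ∀ k, α k) :
    splice (Fin.snoc (α := fun k : Fin (n + 1) => α k) b a) ω = splice b (update ω n a) := by
  funext k
  rcases lt_trichotomy k n with hk | rfl | hk
  · simp [splice, Fin.snoc, hk, hk.trans n.lt_succ_self]
  · simp [splice, Fin.snoc]
  · simp [splice, hk.not_gt, hk.ne', (Nat.succ_le_of_lt hk).not_gt]

variable [∀ k, Fintype (α k)]

/-- The average of `f` over the first `n` coordinates, the others being frozen at those of `ω`:
the conditional expectation of `f` given the coordinates `k ≥ n`, for uniform independent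
coordinates. -/
noncomputable def condAvg (n : ℕ) (f : (∀ k, α k) → ℝ) (ω : ∀ k, α k) : ℝ :=
  𝔼 b : ∀ k : Fin n, α k, f (splice b ω)

/-- The conditional probability of `A` given that the coordinates `k ≥ n` are those of `ω`. -/
noncomputable def condProb (n : ℕ) (A : Set (∀ k, α k)) (ω : ∀ k, α k) : ℝ :=
  condAvg n (A.indicator 1) ω

lemma condAvg_zero (f : (∀ k, α k) → ℝ) (ω : ∀ k, α k) : condAvg 0 f ω = f ω := by
  have h (b : ∀ k : Fin 0, α k) : splice b ω = ω := by funext k; simp [splice]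
  simp [condAvg, h]

lemma condAvg_succ (n : ℕ) (f : (∀ k, α k) → ℝ) (ω : ∀ k, α k) :
    condAvg (n + 1) f ω = 𝔼 a, condAvg n f (update ω n a) := by
  simp only [condAvg]
  rw [← Finset.expect_product' univ univ fun a (b : ∀ k : Fin n, α k) =>
    f (splice b (update ω n a)), univ_product_univ]
  refine (Fintype.expect_equiv (Fin.snocEquiv fun k : Fin (n + 1) => α k) _ _ ?_).symm
  rintro ⟨a, b⟩
  exact congrArg f (splice_snoc b a ω).symm

lemma condAvg_mono (h : ∀ η ∈ fibre n ω, f η ≤ g η) : condAvg n f ω ≤ condAvg n g ω :=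
  expect_le_expect fun b _ => h _ (splice_mem_fibre b ω)

lemma condAvg_const_mul (c : ℝ) (f : (∀ k, α k) → ℝ) (ω : ∀ k, α k) :
    condAvg n (fun η => c * f η) ω = c * condAvg n f ω :=
  (mul_expect _ _ _).symm

lemma condProb_mono (h : ∀ η ∈ fibre n ω, η ∈ A → η ∈ B) : condProb n A ω ≤ condProb n B ω :=
  condAvg_mono fun η hη => by
    by_cases hA : η ∈ A
    · simp [hA, h η hη hA]
    · rw [Set.indicator_of_notMem hA]
      exact Set.indicator_nonneg (fun _ _ => zero_le_one) η

lemma condProb_nonneg (A : Set (∀ k, α k)) (ω : ∀ k, α k) : 0 ≤ condProb n A ω :=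
  expect_nonneg fun _ _ => Set.indicator_nonneg (fun _ _ => zero_le_one) _

variable [∀ k, Nonempty (α k)]

lemma condAvg_const (c : ℝ) (ω : ∀ k, α k) : condAvg n (fun _ => c) ω = c :=
  Fintype.expect_const c

lemma condProb_le_one (A : Set (∀ k, α k)) (ω : ∀ k, α k) : condProb n A ω ≤ 1 :=
  (condAvg_mono fun η _ => Set.indicator_le_self' (fun _ _ => zero_le_one) η).trans_eq
    (condAvg_const 1 ω)

lemma condProb_eq_one (h : fibre n ω ⊆ A) : condProb n A ω = 1 :=
  (condProb_le_one A ω).antisymm <| (condAvg_const 1 ω).symm.trans_le <|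
    condAvg_mono fun η hη => by simp [h hη]

end Averaging

section Slabs

open scoped Classical in
/-- The number of slabs below level `n` that contain `η`. A pair `⟨k, a⟩ ∈ S` encodes the slab
`{η | η k = a}`; slabs over the same coordinate are disjoint, so it suffices to count
coordinates. -/
noncomputable def slabCount {α : ℕ → Type*} (n : ℕ) (S : Finset (Σ k, α k)) (η : ∀ k, α k) : ℕ :=
  #{k ∈ range n | ⟨k, η k⟩ ∈ S}

open scoped Classical in
/-- The sum of the probabilities of the slabs `{η | η k = a}`, `⟨k, a⟩ ∈ S`, with `k < n`. -/
noncomputable def slabMass {α : ℕ → Type*} [∀ k, Fintype (α k)] (n : ℕ)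
    (S : Finset (Σ k, α k)) : ℝ :=
  ∑ k ∈ range n, 𝔼 a : α k, if ⟨k, a⟩ ∈ S then 1 else 0

variable {α : ℕ → Type*} {n : ℕ} {S : Finset (Σ k, α k)} {η ω : ∀ k, α k}

open scoped Classical in
lemma slabCount_succ (n : ℕ) (S : Finset (Σ k, α k)) (η : ∀ k, α k) :
    slabCount (n + 1) S η = slabCount n S η + if ⟨n, η n⟩ ∈ S then 1 else 0 := by
  simp only [slabCount, card_filter, sum_range_succ]

lemma slabCount_pos_iff : 0 < slabCount n S η ↔ ∃ k < n, ⟨k, η k⟩ ∈ S := by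
  simp [slabCount, card_pos, Finset.Nonempty]

open scoped Classical in
lemma slabCount_insert {s : Σ k, α k} (hs : s ∉ S) (hn : s.1 < n) :
    slabCount n (insert s S) η = slabCount n S η + if η s.1 = s.2 then 1 else 0 := by
  obtain ⟨ν, a⟩ := s
  have hiff (k : ℕ) : (⟨k, η k⟩ ∈ insert ⟨ν, a⟩ S) ↔ (k = ν ∧ η ν = a) ∨ ⟨k, η k⟩ ∈ S := by
    rw [Finset.mem_insert]
    refine or_congr_left ⟨fun h => ?_, ?_⟩
    · cases h
      exact ⟨rfl, rfl⟩
    · rintro ⟨rfl, rfl⟩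
      rfl
  simp only [slabCount, hiff]
  split_ifs with h
  · have hν : ν ∉ ({k ∈ range n | ⟨k, η k⟩ ∈ S} : Finset ℕ) := by simp [h, hs]
    rw [← card_insert_of_notMem hν]
    congr 1
    ext k
    simp only [mem_filter, Finset.mem_range, Finset.mem_insert, h, and_true]
    grind
  · simp [h]

variable [∀ k, Fintype (α k)]

open scoped Classical in
lemma slabMass_succ (n : ℕ) (S : Finset (Σ k, α k)) :
    slabMass (n + 1) S = slabMass n S + 𝔼 a : α n, if ⟨n, a⟩ ∈ S then 1 else 0 :=
  sum_range_succ _ _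

lemma slabMass_nonneg (n : ℕ) (S : Finset (Σ k, α k)) : 0 ≤ slabMass n S :=
  sum_nonneg fun _ _ => expect_nonneg fun _ _ => by split_ifs <;> simp

lemma slabMass_le_succ (n : ℕ) (S : Finset (Σ k, α k)) : slabMass n S ≤ slabMass (n + 1) S := by
  rw [slabMass_succ, le_add_iff_nonneg_right]
  exact expect_nonneg fun _ _ => by split_ifs <;> simp

variable [∀ k, Nonempty (α k)]

open scoped Classical in
lemma expect_add_ite_mul (S : Finset (Σ k, α k)) (x y : ℝ) :
    𝔼 a : α n, (x + (if ⟨n, a⟩ ∈ S then 1 else 0) * y) =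
      x + (slabMass (n + 1) S - slabMass n S) * y := by
  rw [expect_add_distrib, Fintype.expect_const, ← expect_mul, slabMass_succ, add_sub_cancel_left]

lemma factorial_div_pow_add_le {c s : ℝ} (hs : 0 ≤ s) (hcs : c + s < 1) (m : ℕ) :
    m ! / (1 - c) ^ (m + 1) + s * ((m + 1)! / (1 - c) ^ (m + 2)) ≤
      m ! / (1 - (c + s)) ^ (m + 1) := by
  have hc : 0 < 1 - c := by linarith
  set u := s / (1 - c) with hu
  have hu0 : 0 ≤ u := by positivity
  have hu1 : u < 1 := (div_lt_one hc).2 (by linarith)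
  have hsplit : 1 - (c + s) = (1 - c) * (1 - u) := by rw [hu]; field_simp; ring
  have hbern : (1 + (m + 1) * u) * (1 - u) ^ (m + 1) ≤ 1 :=
    calc (1 + (m + 1) * u) * (1 - u) ^ (m + 1)
        ≤ (1 + u) ^ (m + 1) * (1 - u) ^ (m + 1) := by
          have : 0 ≤ 1 - u := by linarith
          gcongr
          exact_mod_cast one_add_mul_le_pow (show -2 ≤ u by linarith) (m + 1)
      _ = (1 - u ^ 2) ^ (m + 1) := by rw [← mul_pow]; ring
      _ ≤ 1 := pow_le_one₀ (by nlinarith) (by nlinarith)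
  calc m ! / (1 - c) ^ (m + 1) + s * ((m + 1)! / (1 - c) ^ (m + 2))
      = m ! / (1 - c) ^ (m + 1) * (1 + (m + 1) * u) := by
        rw [hu, Nat.factorial_succ]
        push_cast
        field_simp
        ring
    _ ≤ m ! / (1 - c) ^ (m + 1) * (1 / (1 - u) ^ (m + 1)) := by
        gcongr
        exact (le_div_iff₀ (pow_pos (by linarith) _)).2 hbern
    _ = m ! / (1 - (c + s)) ^ (m + 1) := by rw [hsplit, mul_pow, div_mul_div_comm, mul_one]

/-- The shift by `m` makes the induction on `n` close: a slab in the new coordinate raises `m`. -/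
lemma condAvg_factorial_slabCount_add_le (hS : slabMass n S < 1) (m : ℕ) :
    condAvg n (fun η => ((slabCount n S η + m)! : ℝ)) ω ≤ m ! / (1 - slabMass n S) ^ (m + 1) := by
  classical
  induction n generalizing m ω with
  | zero => simp [condAvg_zero, slabCount, slabMass]
  | succ n ih =>
    have hS' : slabMass n S < 1 := (slabMass_le_succ n S).trans_lt hS
    have : 0 < 1 - slabMass n S := sub_pos.2 hS'
    set x : ℝ := m ! / (1 - slabMass n S) ^ (m + 1)
    set y : ℝ := (m + 1)! / (1 - slabMass n S) ^ (m + 2)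
    have hfibre (a : α n) :
        condAvg n (fun η => ((slabCount (n + 1) S η + m)! : ℝ)) (update ω n a) ≤
          x + (if ⟨n, a⟩ ∈ S then 1 else 0) * y := by
      have hcount {η} (hη : η ∈ fibre n (update ω n a)) :
          slabCount (n + 1) S η = slabCount n S η + if ⟨n, a⟩ ∈ S then 1 else 0 := by
        rw [slabCount_succ, (mem_fibre_update.1 hη).1]
      split_ifs with ha
      · calc condAvg n (fun η => ((slabCount (n + 1) S η + m)! : ℝ)) (update ω n a)
            ≤ condAvg n (fun η => ((slabCount n S η + (m + 1))! : ℝ)) (update ω n a) :=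
              condAvg_mono fun η hη => by rw [hcount hη, if_pos ha, add_assoc, add_comm 1]
          _ ≤ y := ih hS' (m + 1)
          _ ≤ x + 1 * y := by rw [one_mul]; exact le_add_of_nonneg_left (by positivity)
      · rw [zero_mul, add_zero]
        exact (condAvg_mono fun η hη => by rw [hcount hη, if_neg ha, add_zero]).trans (ih hS' m)
    calc condAvg (n + 1) (fun η => ((slabCount (n + 1) S η + m)! : ℝ)) ω
        ≤ 𝔼 a : α n, (x + (if ⟨n, a⟩ ∈ S then 1 else 0) * y) := by
          rw [condAvg_succ]
          exact expect_le_expect fun a _ => hfibre a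
      _ = x + (slabMass (n + 1) S - slabMass n S) * y := expect_add_ite_mul S x y
      _ ≤ m ! / (1 - (slabMass n S + (slabMass (n + 1) S - slabMass n S))) ^ (m + 1) :=
          factorial_div_pow_add_le (sub_nonneg.2 (slabMass_le_succ n S)) (by linarith) m
      _ = m ! / (1 - slabMass (n + 1) S) ^ (m + 1) := by rw [add_sub_cancel]

lemma condAvg_factorial_slabCount_le (hS : slabMass n S ≤ 1 / 4) (ω : ∀ k, α k) :
    condAvg n (fun η => ((slabCount n S η)! : ℝ)) ω ≤ 4 / 3 :=
  calc condAvg n (fun η => ((slabCount n S η)! : ℝ)) ω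
      ≤ 1 / (1 - slabMass n S) := by
        have hS' : slabMass n S < 1 := by linarith
        simpa using condAvg_factorial_slabCount_add_le (ω := ω) hS' 0
    _ ≤ 4 / 3 := by
        rw [div_le_iff₀ (by linarith)]
        linarith

lemma slabMass_div_le_condProb (n : ℕ) (S : Finset (Σ k, α k)) (ω : ∀ k, α k) :
    slabMass n S / (1 + slabMass n S) ≤ condProb n {η | 0 < slabCount n S η} ω := by
  classical
  induction n generalizing ω with
  | zero => simpa [slabMass] using condProb_nonneg _ ω
  | succ n ih =>
    have hc := slabMass_nonneg n S
    set c := slabMass n S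
    have hfibre (a : α n) : c / (1 + c) + (if ⟨n, a⟩ ∈ S then 1 else 0) * (1 / (1 + c)) ≤
        condProb n {η | 0 < slabCount (n + 1) S η} (update ω n a) := by
      split_ifs with ha
      · rw [condProb_eq_one fun η hη => by simp [slabCount_succ, (mem_fibre_update.1 hη).1, ha],
          one_mul, ← add_div, add_comm c, div_self (by positivity)]
      · rw [zero_mul, add_zero]
        refine (ih _).trans (condProb_mono fun η _ h => ?_)
        exact Nat.lt_of_lt_of_le h (by simp [slabCount_succ])
    have hle : c ≤ slabMass (n + 1) S := slabMass_le_succ n S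
    calc slabMass (n + 1) S / (1 + slabMass (n + 1) S)
        ≤ slabMass (n + 1) S / (1 + c) := by gcongr; exact hc.trans hle
      _ = c / (1 + c) + (slabMass (n + 1) S - c) * (1 / (1 + c)) := by ring
      _ = 𝔼 a : α n, (c / (1 + c) + (if ⟨n, a⟩ ∈ S then 1 else 0) * (1 / (1 + c))) :=
          (expect_add_ite_mul S _ _).symm
      _ ≤ condProb (n + 1) {η | 0 < slabCount (n + 1) S η} ω := by
          rw [condProb, condAvg_succ]
          exact expect_le_expect fun a _ => hfibre a

end Slabs

section Selection

variable {α : ℕ → Type*} {n : ℕ} {S : Finset (Σ k, α k)} {s : Σ k, α k} {ω η : ∀ k, α k}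
  {B : Set (∀ k, α k)} {Θ Θ' : Set (Set (∀ k, α k))} {T T' : Finset (Set (∀ k, α k))}
  {c c' : (∀ k, α k) → ℕ}

/-- The configurations that agree with `j` at the coordinate `ν` and at all coordinates in
`[m, n)`. -/
def tailBox (ν m n : ℕ) (j : ∀ k, α k) : Set (∀ k, α k) :=
  {η | ∀ k, k = ν ∨ (m ≤ k ∧ k < n) → η k = j k}

/-- Over the fibre of `ω`, the set `B` is a `tailBox` constraining a coordinate `ν` and the
coordinates `[m, n)`, where `ν < m ≤ n`. -/
def IsTailBoxOver (n : ℕ) (ω : ∀ k, α k) (B : Set (∀ k, α k)) : Prop :=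
  ∃ ν m, ν < m ∧ m ≤ n ∧ ∃ j, ∀ η ∈ fibre n ω, η ∈ B ↔ η ∈ tailBox ν m n j

/-- Over the fibre of `ω`, the set `B` is the slab encoded by `s`. -/
def IsSlabOver (n : ℕ) (ω : ∀ k, α k) (s : Σ k, α k) (B : Set (∀ k, α k)) : Prop :=
  s.1 < n ∧ ∀ η ∈ fibre n ω, η ∈ B ↔ η s.1 = s.2

lemma IsTailBoxOver.isSlabOver_or (h : IsTailBoxOver (n + 1) ω B) :
    (∃ s, IsSlabOver (n + 1) ω s B) ∨
      ∃ a, IsTailBoxOver n (update ω n a) B ∧ ∀ η ∈ fibre (n + 1) ω, η ∈ B → η n = a := by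
  obtain ⟨ν, m, hν, hm, j, hB⟩ := h
  obtain rfl | hm := hm.eq_or_lt
  · refine .inl ⟨⟨ν, j ν⟩, hν, fun η hη => (hB η hη).trans ⟨fun h => h ν (.inl rfl), ?_⟩⟩
    rintro h k (rfl | hk)
    · exact h
    · lia
  · have hmn : m ≤ n := Nat.lt_succ_iff.1 hm
    refine .inr ⟨j n, ⟨ν, m, hν, hmn, j, fun η hη => ?_⟩, fun η hη h =>
      (hB η hη).1 h n (.inr ⟨hmn, n.lt_succ_self⟩)⟩
    obtain ⟨hj, hη⟩ := mem_fibre_update.1 hη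
    refine (hB η hη).trans ⟨fun h k hk => h k (by lia), fun h k hk => ?_⟩
    obtain rfl | hkn := eq_or_ne k n
    · exact hj
    · exact h k (by lia)

lemma IsSlabOver.slabCount_pos (h : IsSlabOver n ω s B) (hs : s ∈ S) (hη : η ∈ fibre n ω)
    (hB : η ∈ B) : 0 < slabCount n S η :=
  slabCount_pos_iff.2 ⟨s.1, h.1, by rwa [(h.2 η hη).1 hB]⟩

open scoped Classical in
/-- The number of members of `T` that contain `x`. -/
noncomputable def overlapCount {β : Type*} (T : Finset (Set β)) (x : β) : ℕ := #{B ∈ T | x ∈ B}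

lemma overlapCount_pos_iff {β : Type*} {T : Finset (Set β)} {x : β} :
    0 < overlapCount T x ↔ x ∈ ⋃₀ (T : Set (Set β)) := by
  simp [overlapCount, card_pos, Finset.Nonempty]

open scoped Classical in
lemma overlapCount_insert_le {β : Type*} (B : Set β) (T : Finset (Set β)) (x : β) :
    overlapCount (insert B T) x ≤ overlapCount T x + if x ∈ B then 1 else 0 := by
  simp only [overlapCount, filter_insert]
  split_ifs
  · exact card_insert_le _ _
  · exact le_rfl

variable [∀ k, Fintype (α k)]

/-- The conclusion of the covering lemma for `T ⊆ Θ`, over the fibre of `ω` and relative to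
previously chosen sets with overlap count `c`. -/
structure IsSelection (n : ℕ) (ω : ∀ k, α k) (c : (∀ k, α k) → ℕ) (Θ : Set (Set (∀ k, α k)))
    (T : Finset (Set (∀ k, α k))) : Prop where
  subset : ↑T ⊆ Θ
  cover : condProb n ({η | 0 < c η} ∪ ⋃₀ Θ) ω ≤ 5 * condProb n {η | 0 < c η + overlapCount T η} ω
  overlap : condAvg n (fun η => ((c η + overlapCount T η - 1)! : ℝ)) ω ≤ 4 / 3

lemma IsSelection.transfer (h : IsSelection n ω c Θ T) (hsub : ↑T' ⊆ Θ')
    (hcover : ∀ η ∈ fibre n ω, 0 < c' η ∨ η ∈ ⋃₀ Θ' → 0 < c η ∨ η ∈ ⋃₀ Θ)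
    (hpos : ∀ η ∈ fibre n ω, 0 < c η + overlapCount T η → 0 < c' η + overlapCount T' η)
    (hle : ∀ η ∈ fibre n ω, c' η + overlapCount T' η ≤ c η + overlapCount T η) :
    IsSelection n ω c' Θ' T' where
  subset := hsub
  cover := (condProb_mono hcover).trans <| h.cover.trans <|
    mul_le_mul_of_nonneg_left (condProb_mono hpos) (by norm_num)
  overlap := (condAvg_mono fun η hη => by
    exact_mod_cast Nat.factorial_le (Nat.sub_le_sub_right (hle η hη) 1)).trans h.overlap

lemma isSelection_empty (hcover : ∀ η ∈ fibre n ω, η ∈ ⋃₀ Θ → 0 < c η)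
    (hc : condAvg n (fun η => ((c η - 1)! : ℝ)) ω ≤ 4 / 3) : IsSelection n ω c Θ ∅ where
  subset := by simp
  cover :=
    calc condProb n ({η | 0 < c η} ∪ ⋃₀ Θ) ω
        ≤ condProb n {η | 0 < c η + overlapCount ∅ η} ω :=
          condProb_mono fun η hη h =>
            Nat.add_pos_left (h.elim id (hcover η hη)) _
      _ ≤ 5 * condProb n {η | 0 < c η + overlapCount ∅ η} ω := by
          linarith [condProb_nonneg {η | 0 < c η + overlapCount ∅ η} ω (n := n)]
  overlap := by simpa [overlapCount] using hc

open scoped Classical in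
lemma IsSelection.insert_slab (hB : B ∈ Θ) (hslab : IsSlabOver n ω s B) (hs : s ∉ S)
    (h : IsSelection n ω (slabCount n (insert s S)) Θ T) :
    IsSelection n ω (slabCount n S) Θ (insert B T) := by
  have hcount {η} (hη : η ∈ fibre n ω) :
      slabCount n (insert s S) η = slabCount n S η + if η ∈ B then 1 else 0 := by
    rw [slabCount_insert hs hslab.1]
    simp only [hslab.2 η hη]
  refine h.transfer (by simpa [Set.insert_subset_iff] using ⟨hB, h.subset⟩)
    (fun η hη => ?_) (fun η hη => ?_) (fun η hη => ?_)
  · refine Or.imp_left fun h => ?_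
    rw [hcount hη]
    exact Nat.add_pos_left h _
  · rw [hcount hη]
    simp only [Nat.add_pos_iff_pos_or_pos, overlapCount_pos_iff, Finset.coe_insert,
      Set.sUnion_insert, Set.mem_union]
    grind
  · rw [hcount hη]
    linarith [overlapCount_insert_le B T η]

variable [∀ k, Nonempty (α k)]

open scoped Classical in
lemma IsSelection.biUnion {T : α n → Finset (Set (∀ k, α k))}
    (h : ∀ a, IsSelection n (update ω n a) c Θ (T a))
    (hT : ∀ a, ∀ B ∈ T a, ∀ η ∈ fibre (n + 1) ω, η ∈ B → η n = a) :
    IsSelection (n + 1) ω c Θ (univ.biUnion T) := by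
  have hcount {a η} (hη : η ∈ fibre n (update ω n a)) :
      overlapCount (univ.biUnion T) η = overlapCount (T a) η := by
    obtain ⟨rfl, hη'⟩ := mem_fibre_update.1 hη
    refine congrArg Finset.card (Finset.ext fun B => ?_)
    simp only [Finset.mem_filter, Finset.mem_biUnion, Finset.mem_univ, true_and]
    refine and_congr_left fun hηB => ⟨?_, fun hB => ⟨_, hB⟩⟩
    rintro ⟨b, hB⟩
    exact hT b B hB η hη' hηB ▸ hB
  have hfibre (a : α n) : IsSelection n (update ω n a) c Θ (univ.biUnion T) :=
    (h a).transfer (by simpa using fun a => (h a).subset) (fun _ _ => id)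
      (fun η hη => by rw [hcount hη]; exact id) (fun η hη => by rw [hcount hη])
  refine ⟨by simpa using fun a => (h a).subset, ?_, ?_⟩
  · simp only [condProb, condAvg_succ, mul_expect]
    exact expect_le_expect fun a _ => (hfibre a).cover
  · rw [condAvg_succ]
    exact expect_le univ_nonempty fun a _ => (hfibre a).overlap

open scoped Classical in
lemma isSelection_singleton (hB : B ∈ Θ) (hslab : IsSlabOver n ω s B) (hs : s ∉ S)
    (hS : slabMass n S ≤ 1 / 4) (hsS : 1 / 4 < slabMass n (insert s S)) :
    IsSelection n ω (slabCount n S) Θ {B} where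
  subset := by simpa using hB
  cover := by
    set p := slabMass n (insert s S)
    have hmono : condProb n {η | 0 < slabCount n (insert s S) η} ω ≤
        condProb n {η | 0 < slabCount n S η + overlapCount {B} η} ω :=
      condProb_mono fun η hη h => by
        simp only [Set.mem_ofPred_eq, slabCount_insert hs hslab.1, ← hslab.2 η hη,
          Nat.add_pos_iff_pos_or_pos, overlapCount_pos_iff, Finset.coe_singleton,
          Set.sUnion_singleton] at h ⊢
        grind
    have hp : 1 / 5 ≤ p / (1 + p) := by
      rw [div_le_div_iff₀ (by norm_num) (by linarith)]
      linarith
    calc condProb n ({η | 0 < slabCount n S η} ∪ ⋃₀ Θ) ω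
        ≤ 1 := condProb_le_one _ ω
      _ ≤ 5 * (p / (1 + p)) := by linarith
      _ ≤ 5 * condProb n {η | 0 < slabCount n S η + overlapCount {B} η} ω := by
          gcongr
          exact (slabMass_div_le_condProb n _ ω).trans hmono
  overlap := by
    refine (condAvg_mono fun η _ => ?_).trans (condAvg_factorial_slabCount_le hS ω)
    have hB1 : overlapCount {B} η ≤ 1 := (card_filter_le _ _).trans_eq (Finset.card_singleton B)
    exact_mod_cast Nat.factorial_le (by lia)

/-- Slabs of `Θ` may be moved into `S` one at a time until `S` contains all of them; if the mass
exceeds `1 / 4` on the way, the last slab already completes a selection. -/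
lemma exists_isSelection_of_saturated
    (hsat : ∀ S, slabMass n S ≤ 1 / 4 → (∀ B ∈ Θ, ∀ s, IsSlabOver n ω s B → s ∈ S) →
      ∃ T, IsSelection n ω (slabCount n S) Θ T)
    (hS : slabMass n S ≤ 1 / 4) : ∃ T, IsSelection n ω (slabCount n S) Θ T := by
  classical
  induction hN : #(((range n).sigma fun _ => univ) \ S) using Nat.strong_induction_on
    generalizing S with
  | _ N ih =>
    by_cases h : ∀ B ∈ Θ, ∀ s, IsSlabOver n ω s B → s ∈ S
    · exact hsat S hS h
    push Not at h
    obtain ⟨B, hB, s, hslab, hs⟩ := h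
    obtain hle | hlt := le_or_gt (slabMass n (insert s S)) (1 / 4)
    · have hsmem : s ∈ ((range n).sigma fun k => (univ : Finset (α k))) \ S := by
        simp [hslab.1, hs]
      obtain ⟨T, hT⟩ := ih _ (by
        rw [← hN, Finset.sdiff_insert]
        exact card_erase_lt_of_mem hsmem) hle rfl
      exact ⟨insert B T, hT.insert_slab hB hslab hs⟩
    · exact ⟨{B}, isSelection_singleton hB hslab hs hS hlt⟩

theorem exists_isSelection (hΘ : ∀ B ∈ Θ, IsTailBoxOver n ω B) (hS : slabMass n S ≤ 1 / 4) :
    ∃ T, IsSelection n ω (slabCount n S) Θ T := by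
  induction n generalizing ω S Θ with
  | zero =>
    refine ⟨∅, isSelection_empty ?_ (by simp [condAvg_zero, slabCount]; norm_num)⟩
    rintro η - ⟨B, hB, -⟩
    obtain ⟨ν, m, hν, hm, -⟩ := hΘ B hB
    lia
  | succ n ih =>
    refine exists_isSelection_of_saturated (fun S hS hsat => ?_) hS
    have hS' : slabMass n S ≤ 1 / 4 := (slabMass_le_succ n S).trans hS
    have hfibre (a : α n) : ∃ T, IsSelection n (update ω n a) (slabCount (n + 1) S) Θ T ∧
        ∀ B ∈ T, ∀ η ∈ fibre (n + 1) ω, η ∈ B → η n = a := by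
      classical
      have hcount {η} (hη : η ∈ fibre n (update ω n a)) :
          slabCount (n + 1) S η = slabCount n S η + if ⟨n, a⟩ ∈ S then 1 else 0 := by
        rw [slabCount_succ, (mem_fibre_update.1 hη).1]
      by_cases ha : ⟨n, a⟩ ∈ S
      · simp only [ha, if_true] at hcount
        refine ⟨∅, isSelection_empty (fun η hη _ => by simp [hcount hη]) ?_, by simp⟩
        exact (condAvg_mono fun η hη => by rw [hcount hη, Nat.add_sub_cancel]).trans
          (condAvg_factorial_slabCount_le hS' _)
      · simp only [ha, if_false, add_zero] at hcount
        obtain ⟨T, hT⟩ := ih (Θ := {B ∈ Θ | IsTailBoxOver n (update ω n a) B ∧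
          ∀ η ∈ fibre (n + 1) ω, η ∈ B → η n = a}) (fun B hB => hB.2.1) hS'
        refine ⟨T, hT.transfer (hT.subset.trans (Set.sep_subset _ _)) (fun η hη h => ?_)
          (fun η hη => by rw [hcount hη]; exact id) (fun η hη => by rw [hcount hη]),
          fun B hB => (hT.subset hB).2.2⟩
        rw [← hcount hη]
        obtain h | ⟨B, hB, hηB⟩ := h
        · exact .inl h
        have hη' := (mem_fibre_update.1 hη).2
        obtain ⟨s, hs⟩ | ⟨b, hbox, hb⟩ := (hΘ B hB).isSlabOver_or
        · exact .inl (hs.slabCount_pos (hsat B hB s hs) hη' hηB)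
        · obtain rfl : a = b := (mem_fibre_update.1 hη).1.symm.trans (hb η hη' hηB)
          exact .inr ⟨B, ⟨hB, hbox, hb⟩, hηB⟩
    choose T hT hTa using hfibre
    classical
    exact ⟨univ.biUnion T, .biUnion hT hTa⟩

end Selection

section UniformDigits

variable {α : ℕ → Type*} {d : ℕ} {A : Set (∀ k, α k)} {Θ : Set (Set (∀ k, α k))}
  {T : Finset (Set (∀ k, α k))} {f : (∀ k, α k) → ℝ}

/-- The sets `tailBox ν m d j` with `ν < m ≤ d`: the rectangles of `𝓕_d` in terms of digits. -/
def tailBoxes (α : ℕ → Type*) (d : ℕ) : Set (Set (∀ k, α k)) :=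
  {B | ∃ ν m, ν < m ∧ m ≤ d ∧ ∃ j, B = tailBox ν m d j}

lemma dependsOn_mem_of_mem_tailBoxes (hA : A ∈ tailBoxes α d) :
    DependsOn (fun η => η ∈ A) (Set.Iio d) := by
  obtain ⟨ν, m, hν, hm, j, rfl⟩ := hA
  refine fun x y hxy => propext (forall₂_congr fun k hk => ?_)
  rw [hxy k (show k < d by lia)]

lemma dependsOn_mem_sUnion (h : Θ ⊆ tailBoxes α d) :
    DependsOn (fun η => η ∈ ⋃₀ Θ) (Set.Iio d) := fun _ _ hxy =>
  propext (exists_congr fun _ => and_congr_right fun hB =>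
    iff_of_eq (dependsOn_mem_of_mem_tailBoxes (h hB) hxy))

lemma dependsOn_overlapCount (h : ↑T ⊆ tailBoxes α d) :
    DependsOn (overlapCount T) (Set.Iio d) := fun _ _ hxy => by
  classical
  exact congrArg Finset.card (Finset.filter_congr fun B hB =>
    iff_of_eq (dependsOn_mem_of_mem_tailBoxes (h hB) hxy))

variable {X : Type*} [MeasurableSpace X] {μ : Measure X} {D : X → ∀ k, α k}
  [∀ k, Fintype (α k)]

/-- The first `d` digits of `D` are independent and uniformly distributed under `μ`. -/
structure HasUniformDigits (μ : Measure X) (D : X → ∀ k, α k) (d : ℕ) : Prop where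
  measurableSet_cylinder (b : ∀ k : Fin d, α k) : MeasurableSet {x | ∀ k : Fin d, D x k = b k}
  measureReal_cylinder (b : ∀ k : Fin d, α k) :
    μ.real {x | ∀ k : Fin d, D x k = b k} = (Fintype.card (∀ k : Fin d, α k) : ℝ)⁻¹

namespace HasUniformDigits

lemma measurableSet_preimage (hD : HasUniformDigits μ D d)
    (hA : DependsOn (fun η => η ∈ A) (Set.Iio d)) : MeasurableSet (D ⁻¹' A) := by
  have hcyl : D ⁻¹' A = ⋃ b ∈ {b : ∀ k : Fin d, α k | ∃ η ∈ A, ∀ k : Fin d, η k = b k},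
      {x | ∀ k : Fin d, D x k = b k} := by
    ext x
    simp only [Set.mem_preimage, Set.mem_iUnion, Set.mem_ofPred_eq, exists_prop]
    constructor
    · exact fun hx => ⟨fun k => D x k, ⟨D x, hx, fun _ => rfl⟩, fun _ => rfl⟩
    · rintro ⟨b, ⟨η, hη, hηb⟩, hxb⟩
      exact (hA fun k hk => (hxb ⟨k, hk⟩).trans (hηb ⟨k, hk⟩).symm).mpr hη
  rw [hcyl]
  exact .biUnion (Set.to_countable _) fun b _ => hD.measurableSet_cylinder b

variable [IsFiniteMeasure μ]

lemma integral_comp (hD : HasUniformDigits μ D d) (hf : DependsOn f (Set.Iio d))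
    (ω : ∀ k, α k) : ∫ x, f (D x) ∂μ = condAvg d f ω := by
  classical
  have hsum (x : X) : f (D x) =
      ∑ b, {x | ∀ k : Fin d, D x k = b k}.indicator (fun _ => f (splice b ω)) x := by
    rw [Finset.sum_eq_single (fun k : Fin d => D x k) (fun b _ hb => ?_) (by simp)]
    · rw [Set.indicator_of_mem (Set.mem_ofPred_eq.mpr fun _ => rfl)]
      exact hf fun k hk => by simp [splice, Set.mem_Iio.1 hk]
    · exact Set.indicator_of_notMem (fun h => hb (funext fun k => (h k).symm)) _
  simp only [hsum, condAvg, Fintype.expect_eq_sum_div_card, sum_div]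
  rw [integral_finsetSum _ fun b _ =>
    (integrable_const _).indicator (hD.measurableSet_cylinder b)]
  refine Finset.sum_congr rfl fun b _ => ?_
  rw [integral_indicator_const _ (hD.measurableSet_cylinder b), hD.measureReal_cylinder,
    smul_eq_mul, inv_mul_eq_div]

lemma measureReal_preimage (hD : HasUniformDigits μ D d)
    (hA : DependsOn (fun η => η ∈ A) (Set.Iio d)) (ω : ∀ k, α k) :
    μ.real (D ⁻¹' A) = condProb d A ω := by
  classical
  have hA' : DependsOn (A.indicator (1 : (∀ k, α k) → ℝ)) (Set.Iio d) := fun x y hxy => by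
    simp only [Set.indicator_apply, iff_of_eq (hA hxy), Pi.one_apply]
  rw [condProb, ← hD.integral_comp hA', ← integral_indicator_one (hD.measurableSet_preimage hA)]
  rfl

variable [∀ k, Nonempty (α k)]

theorem exists_finset_cover (hD : HasUniformDigits μ D d) (hΘ : Θ ⊆ tailBoxes α d) :
    ∃ T : Finset (Set (∀ k, α k)), ↑T ⊆ Θ ∧ μ (D ⁻¹' ⋃₀ Θ) ≤ 5 * μ (D ⁻¹' ⋃₀ ↑T) ∧
      ∀ (Φ : ℕ → ℝ) (c : ℝ), 0 ≤ c → (∀ k, Φ k ≤ c * (k - 1)!) →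
        ∫ x, Φ (overlapCount T (D x)) ∂μ ≤ c * (4 / 3) := by
  let ω : ∀ k, α k := fun _ => Classical.arbitrary _
  have hbox (B) (hB : B ∈ Θ) : IsTailBoxOver d ω B := by
    obtain ⟨ν, m, hν, hm, j, rfl⟩ := hΘ hB
    exact ⟨ν, m, hν, hm, j, fun _ _ => Iff.rfl⟩
  obtain ⟨T, hsub, hcover, hoverlap⟩ := exists_isSelection (S := ∅) hbox (by simp [slabMass])
  have hT := hsub.trans hΘ
  refine ⟨T, hsub, ?_, fun Φ c hc hΦ => ?_⟩
  · have hreal : μ.real (D ⁻¹' ⋃₀ Θ) ≤ 5 * μ.real (D ⁻¹' ⋃₀ ↑T) := by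
      rw [hD.measureReal_preimage (dependsOn_mem_sUnion hΘ) ω,
        hD.measureReal_preimage (dependsOn_mem_sUnion hT) ω]
      simpa [slabCount, overlapCount_pos_iff, -Set.mem_sUnion] using hcover
    rw [← ofReal_measureReal, ← ofReal_measureReal (s := D ⁻¹' ⋃₀ ↑T)]
    simpa [ENNReal.ofReal_mul] using ENNReal.ofReal_le_ofReal hreal
  · calc ∫ x, Φ (overlapCount T (D x)) ∂μ
        = condAvg d (fun η => Φ (overlapCount T η)) ω :=
          hD.integral_comp (f := fun η => Φ (overlapCount T η))
            (fun x y hxy => congrArg Φ (dependsOn_overlapCount hT hxy)) ω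
      _ ≤ condAvg d (fun η => c * ((overlapCount T η - 1)! : ℝ)) ω := condAvg_mono fun _ _ => hΦ _
      _ = c * condAvg d (fun η => ((overlapCount T η - 1)! : ℝ)) ω := condAvg_const_mul _ _ _
      _ ≤ c * (4 / 3) := by
          gcongr
          simpa [slabCount] using hoverlap

end HasUniformDigits

end UniformDigits

section Torus

lemma mem_circleIco_iff {a b t : ℝ} (h : Set.Ico a b ⊆ Set.Ico t (t + 1)) {y : Circle1} :
    y ∈ circleIco a b ↔ (AddCircle.equivIco 1 t y : ℝ) ∈ Set.Ico a b := by
  constructor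
  · rintro ⟨r, hr, rfl⟩
    rwa [AddCircle.equivIco_coe_of_mem (h hr)]
  · exact fun hy => ⟨_, hy, AddCircle.coe_equivIco⟩

lemma measurableSet_circleIco {a b t : ℝ} (h : Set.Ico a b ⊆ Set.Ico t (t + 1)) :
    MeasurableSet (circleIco a b) := by
  have hpre : circleIco a b =
      (fun y => (AddCircle.measurableEquivIco 1 t y : ℝ)) ⁻¹' Set.Ico a b :=
    Set.ext fun _ => mem_circleIco_iff h
  rw [hpre]
  exact (measurable_subtype_coe.comp (AddCircle.measurableEquivIco 1 t).measurable)
    measurableSet_Ico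

lemma volume_circleIco {a b t : ℝ} (h : Set.Ico a b ⊆ Set.Ico t (t + 1)) :
    volume (circleIco a b) = ENNReal.ofReal (b - a) := by
  have hpre : ((↑) : ℝ → Circle1) ⁻¹' circleIco a b ∩ Set.Ico t (t + 1) = Set.Ico a b := by
    ext r
    refine ⟨fun ⟨hr, hrt⟩ => ?_, fun hr => ⟨⟨r, hr, rfl⟩, h hr⟩⟩
    rwa [Set.mem_preimage, mem_circleIco_iff h, AddCircle.equivIco_coe_of_mem hrt] at hr
  rw [← (UnitAddCircle.measurePreserving_mk t).measure_preimage
    (measurableSet_circleIco h).nullMeasurableSet, Measure.restrict_congr_set Ico_ae_eq_Ioc.symm,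
    Measure.restrict_apply' measurableSet_Ico, hpre, Real.volume_Ico]

variable {q : ℕ} [NeZero q]

lemma Ico_div_subset (a : Fin q) :
    Set.Ico ((a : ℝ) / q) (((a : ℝ) + 1) / q) ⊆ Set.Ico 0 (0 + 1) := by
  have hq : (0 : ℝ) < q := Nat.cast_pos.2 (NeZero.pos q)
  refine Set.Ico_subset_Ico (by positivity) ?_
  rw [zero_add, div_le_one hq]
  exact_mod_cast a.2

/-- The first digit of a point of the circle in base `q`. -/
noncomputable def circleDigit (q : ℕ) [NeZero q] (y : Circle1) : Fin q :=
  ⟨⌊(AddCircle.equivIco 1 0 y : ℝ) * q⌋₊, by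
    have hq : (0 : ℝ) < q := Nat.cast_pos.2 (NeZero.pos q)
    obtain ⟨h0, h1⟩ := (AddCircle.equivIco (1 : ℝ) 0 y).2
    rw [Nat.floor_lt (by positivity)]
    nlinarith⟩

lemma mem_circleIco_iff_circleDigit_eq {a : Fin q} {y : Circle1} :
    y ∈ circleIco ((a : ℝ) / q) (((a : ℝ) + 1) / q) ↔ circleDigit q y = a := by
  have hq : (0 : ℝ) < q := Nat.cast_pos.2 (NeZero.pos q)
  have h0 : 0 ≤ (AddCircle.equivIco (1 : ℝ) 0 y : ℝ) := (AddCircle.equivIco (1 : ℝ) 0 y).2.1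
  rw [mem_circleIco_iff (Ico_div_subset a), Fin.ext_iff, circleDigit,
    Nat.floor_eq_iff (by positivity), Set.mem_Ico, div_le_iff₀ hq, lt_div_iff₀ hq]

lemma circleDigit_surjective : Surjective (circleDigit q) := fun a =>
  have hq : (0 : ℝ) < q := Nat.cast_pos.2 (NeZero.pos q)
  ⟨_, mem_circleIco_iff_circleDigit_eq.1 ⟨(a : ℝ) / q, ⟨le_rfl, by gcongr; simp⟩, rfl⟩⟩

variable {p : ℕ → ℕ} [∀ k, NeZero (p k)] {d : ℕ}

/-- The first digit of each coordinate of `x`, in base `p k` for the coordinate `x k`. -/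
noncomputable def digits (p : ℕ → ℕ) [∀ k, NeZero (p k)] (x : Tinf) (k : ℕ) : Fin (p k) :=
  circleDigit (p k) (x k)

lemma digits_surjective : Surjective (digits p) := fun η => by
  choose x hx using fun k => circleDigit_surjective (η k)
  exact ⟨x, funext hx⟩

lemma setOf_digits_eq (η : ∀ k, Fin (p k)) (d : ℕ) :
    {x | ∀ k : Fin d, digits p x k = η k} =
      {x | ∀ k ∈ range d, x k ∈ circleIco ((η k : ℝ) / p k) (((η k : ℝ) + 1) / p k)} := by
  simp only [digits, mem_circleIco_iff_circleDigit_eq, Finset.mem_range, Fin.forall_iff]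

lemma IsProductLebesgue.hasUniformDigits {μ : Measure Tinf} (hμ : IsProductLebesgue μ)
    (p : ℕ → ℕ) [∀ k, NeZero (p k)] (d : ℕ) : HasUniformDigits μ (digits p) d := by
  have harc (η : ∀ k, Fin (p k)) (k : ℕ) :
      MeasurableSet (circleIco ((η k : ℝ) / p k) (((η k : ℝ) + 1) / p k)) :=
    measurableSet_circleIco (Ico_div_subset (η k))
  have hextend (b : ∀ k : Fin d, Fin (p k)) : ∃ η : ∀ k, Fin (p k), b = fun k : Fin d => η k :=
    ⟨splice b 0, by funext k; simp [splice]⟩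
  constructor <;> intro b <;> obtain ⟨η, rfl⟩ := hextend b <;> rw [setOf_digits_eq]
  · simp only [Set.ofPred_forall]
    exact Finset.measurableSet_biInter _ fun k _ => measurable_pi_apply k (harc η k)
  · have hvol (k : ℕ) :
        (volume (circleIco ((η k : ℝ) / p k) (((η k : ℝ) + 1) / p k))).toReal = (p k : ℝ)⁻¹ := by
      rw [volume_circleIco (Ico_div_subset (η k)), ← sub_div, add_sub_cancel_left, one_div,
        ENNReal.toReal_ofReal (by positivity)]
    rw [measureReal_def, hμ.2 _ _ (harc η), ENNReal.toReal_prod]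
    simp only [hvol, prod_inv_distrib, Fintype.card_pi, Fintype.card_fin, Nat.cast_prod,
      ← Fin.prod_univ_eq_prod_range]

/-- The family `𝓕_d` for an arbitrary sequence `p` of bases in place of the primes. -/
def rectangleFamily (p : ℕ → ℕ) (d : ℕ) : Set (Set Tinf) :=
  {B | ∃ ν mu : ℕ, ν < mu ∧ mu ≤ d ∧ ∃ j : ℕ → ℕ, (∀ k, j k < p k) ∧
    B = {x | ∀ k : ℕ, (k = ν ∨ (mu ≤ k ∧ k < d)) →
      x k ∈ circleIco ((j k : ℝ) / (p k : ℝ)) (((j k : ℝ) + 1) / (p k : ℝ))}}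

lemma exists_tailBox_of_mem_rectangleFamily {A : Set Tinf} (hA : A ∈ rectangleFamily p d) :
    ∃ R ∈ tailBoxes (fun k => Fin (p k)) d, A = digits p ⁻¹' R := by
  obtain ⟨ν, m, hν, hm, j, hj, rfl⟩ := hA
  refine ⟨tailBox ν m d fun k => ⟨j k, hj k⟩, ⟨ν, m, hν, hm, _, rfl⟩, ?_⟩
  ext x
  exact forall₂_congr fun k _ => mem_circleIco_iff_circleDigit_eq (a := ⟨j k, hj k⟩)

end Torus

section Psi

lemma norm_alphaFn_le {m : ℕ} {t : ℝ} (ht0 : 0 ≤ t) (ht : t ≤ m + 1) :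
    ‖alphaFn t‖ ≤ ((m : ℝ) + 1) ^ m := by
  have hm : (1 : ℝ) ≤ m + 1 := by linarith [m.cast_nonneg (α := ℝ)]
  unfold alphaFn
  split_ifs with h
  · rw [Real.norm_of_nonneg (by positivity)]
    calc t ^ (t - 1) ≤ ((m : ℝ) + 1) ^ (t - 1) := by gcongr
      _ ≤ ((m : ℝ) + 1) ^ (m : ℝ) := by gcongr; linarith
      _ = ((m : ℝ) + 1) ^ m := Real.rpow_natCast _ _
  · rw [Real.norm_of_nonneg ht0]
    exact (not_lt.1 h).trans (one_le_pow₀ hm)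

lemma PsiFn_le {m : ℕ} {t : ℝ} (ht0 : 0 ≤ t) (ht : t ≤ m + 1) :
    PsiFn t ≤ ((m : ℝ) + 1) ^ (m + 1) :=
  calc PsiFn t = ∫ s in (0 : ℝ)..t, alphaFn s := by rw [PsiFn, abs_of_nonneg ht0]
    _ ≤ ((m : ℝ) + 1) ^ m * |t - 0| :=
        (Real.le_norm_self _).trans <| intervalIntegral.norm_integral_le_of_norm_le_const
          fun s hs => by
            rw [Set.uIoc_of_le ht0] at hs
            exact norm_alphaFn_le hs.1.le (hs.2.trans ht)
    _ ≤ ((m : ℝ) + 1) ^ m * (m + 1) := by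
        rw [sub_zero, abs_of_nonneg ht0]
        gcongr
    _ = ((m : ℝ) + 1) ^ (m + 1) := (pow_succ _ _).symm

lemma succ_pow_succ_le_factorial (k : ℕ) : (k / 3 + 1) ^ (k / 3 + 1) ≤ 4 * k ! := by
  generalize hq : k / 3 = q
  obtain hq2 | hq2 := lt_or_ge q 2
  · have := k.factorial_pos
    interval_cases q <;> lia
  · calc (q + 1) ^ (q + 1) ≤ (q + 1 + 1) ^ (q + 1) := by gcongr; lia
      _ ≤ (q + 1)! * (q + 1 + 1) ^ (q + 1) := Nat.le_mul_of_pos_left _ (q + 1).factorial_pos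
      _ ≤ (q + 1 + (q + 1))! := Nat.factorial_mul_pow_le_factorial
      _ ≤ k ! := Nat.factorial_le (by lia)
      _ ≤ 4 * k ! := by lia

lemma PsiFn_third_mul_le (k : ℕ) : PsiFn (1 / 3 * k) ≤ 4 * (k - 1)! := by
  cases k with
  | zero => simp [PsiFn]
  | succ k =>
    have hk : (k : ℝ) + 1 ≤ 3 * ((k / 3 : ℕ) + 1) := by exact_mod_cast (by lia)
    calc PsiFn (1 / 3 * ↑(k + 1)) ≤ (((k / 3 : ℕ) : ℝ) + 1) ^ (k / 3 + 1) :=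
          PsiFn_le (by positivity) (by push_cast; linarith)
      _ ≤ 4 * k ! := by exact_mod_cast succ_pow_succ_le_factorial k

end Psi

instance (k : ℕ) : NeZero (nthPrime k) := ⟨(Nat.prime_nth_prime k).ne_zero⟩

lemma sum_indicator_equivFin_symm {β : Type*} (T : Finset (Set β)) (y : β) :
    ∑ i, (T.equivFin.symm i : Set β).indicator (fun _ => (1 : ℝ)) y = overlapCount T y := by
  classical
  rw [Equiv.sum_comp T.equivFin.symm fun B : T => (B : Set β).indicator (fun _ => (1 : ℝ)) y,
    Finset.sum_coe_sort T fun B => B.indicator (fun _ => (1 : ℝ)) y, overlapCount,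
    Finset.card_filter]
  simp [Set.indicator_apply]

theorem covering_lemma_Fd_general (p : ℕ → ℕ) [∀ k, NeZero (p k)] (d : ℕ) {μ : Measure Tinf}
    (hμ : IsProductLebesgue μ) {Θ : Set (Set Tinf)} (hΘ : Θ ⊆ rectangleFamily p d) :
    ∃ (m : ℕ) (Atil : Fin m → Set Tinf), Injective Atil ∧ (∀ i, Atil i ∈ Θ) ∧
      μ (⋃₀ Θ) ≤ 5 * μ (⋃ i, Atil i) ∧
      ∫ x, PsiFn ((1 / 3) * ∑ i, (Atil i).indicator (fun _ => (1 : ℝ)) x) ∂μ ≤ 16 / 3 := by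
  have := hμ.1
  let Θ' := {R ∈ tailBoxes (fun k => Fin (p k)) d | digits p ⁻¹' R ∈ Θ}
  have hunion : ⋃₀ Θ ⊆ digits p ⁻¹' ⋃₀ Θ' := by
    rintro x ⟨A, hA, hx⟩
    obtain ⟨R, hR, rfl⟩ := exists_tailBox_of_mem_rectangleFamily (hΘ hA)
    exact ⟨R, ⟨hR, hA⟩, hx⟩
  obtain ⟨T, hT, hcover, hoverlap⟩ :=
    (hμ.hasUniformDigits p d).exists_finset_cover (Set.sep_subset _ _ : Θ' ⊆ _)
  refine ⟨#T, fun i => digits p ⁻¹' T.equivFin.symm i,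
    digits_surjective.preimage_injective.comp
      (Subtype.val_injective.comp T.equivFin.symm.injective),
    fun i => (hT (T.equivFin.symm i).2).2, ?_, ?_⟩
  · have hsUnion : ⋃ i, (T.equivFin.symm i).1 = ⋃₀ (T : Set (Set _)) :=
      (T.equivFin.symm.surjective.iUnion_comp fun R => R.1).trans Set.sUnion_eq_iUnion.symm
    rw [← Set.preimage_iUnion, hsUnion]
    exact (measure_mono hunion).trans hcover
  · calc ∫ x, PsiFn ((1 / 3) * ∑ i, (digits p ⁻¹' T.equivFin.symm i).indicator (fun _ => 1) x) ∂μ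
        = ∫ x, PsiFn (1 / 3 * overlapCount T (digits p x)) ∂μ :=
          integral_congr_ae <| .of_forall fun x =>
            congrArg (fun s => PsiFn (1 / 3 * s)) (sum_indicator_equivFin_symm T (digits p x))
      _ ≤ 4 * (4 / 3) := hoverlap _ 4 (by norm_num) PsiFn_third_mul_le
      _ = 16 / 3 := by norm_num

/-- **Covering lemma for `𝓕_d` (Lemma 5).** There is an absolute constant `C > 0` such
that any collection `Θ` of rectangles from `𝓕_d` contains a finite subcollection
`Ã_1, …, Ã_m` with `λ(⋃ Θ) ≤ 5·λ(⋃ Ã_j)` and `∫ Ψ((1/3) ∑ 𝟙_{Ã_j}) dλ ≤ C`. -/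
theorem covering_lemma_Fd :
    ∃ C : ℝ, 0 < C ∧
      ∀ (d : ℕ), 1 ≤ d →
        ∀ (μ : Measure Tinf), IsProductLebesgue μ →
          ∀ Θ : Set (Set Tinf), Θ ⊆ Fd d →
            ∃ (m : ℕ) (Atil : Fin m → Set Tinf), Function.Injective Atil ∧
              (∀ i, Atil i ∈ Θ) ∧
              μ (⋃₀ Θ) ≤ 5 * μ (⋃ i, Atil i) ∧
              (∫ x, PsiFn ((1 / 3) * ∑ i, (Atil i).indicator (fun _ => (1:ℝ)) x) ∂μ) ≤ C :=
  ⟨16 / 3, by norm_num, fun d _ _ hμ _ hΘ => covering_lemma_Fd_general nthPrime d hμ hΘ⟩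
end
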